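/- arXiv:1502.07618 — 4 statements merged into one kernel-verified Lean document; each statement's English description precedes it below -/
import Mathlib

section
/- An invertible RDS φ on 𝕊¹ is stably synchronising if and only if ℙ(Ω_c)=1 and for every x∈𝕊¹, ℙ(ω∈Ω_c : r̃(ω)=x)=0, where Ω_c is the set of contractive sample points and r̃ the crack-point map. -/
open MeasureTheory Filter Topology Set ENNReal

noncomputable section

/-- The natural projection `π : ℝ → 𝕊¹ = ℝ/ℤ`. -/
def circleProj (x : ℝ) : UnitAddCircle := (x : UnitAddCircle)

/-- `f` is an orientation-preserving homeomorphism of the circle: it admits a strictly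
monotone degree-one lift. -/
def OrientPreserving (f : UnitAddCircle ≃ₜ UnitAddCircle) : Prop :=
  ∃ F : ℝ → ℝ, StrictMono F ∧ (∀ x : ℝ, F (x + 1) = F x + 1) ∧
    ∀ x : ℝ, f (circleProj x) = circleProj (F x)

/-- The anticlockwise distance `d₊(x,y) = min {r ≥ 0 : π(x' + r) = y}` (`x'` any lift of `x`). -/
def dPlus (x y : UnitAddCircle) : ℝ :=
  sInf {r : ℝ | 0 ≤ r ∧ ∃ x' : ℝ, circleProj x' = x ∧ circleProj (x' + r) = y}

/-- An invertible random dynamical system on the circle, in discrete or continuous time,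
driven by a stationary memoryless noise process. -/
structure RDS (Ω : Type) [m : MeasurableSpace Ω] where
  /-- the time set `𝕋⁺`: either `ℕ ∪ {0}` or `[0,∞)`, viewed inside `ℝ` -/
  T : Set ℝ
  T_cases : T = Set.range (fun n : ℕ => (n : ℝ)) ∨ T = Set.Ici (0 : ℝ)
  /-- the filtration -/
  F : ℝ → MeasurableSpace Ω
  F_le : ∀ t ∈ T, F t ≤ m
  F_mono : ∀ s ∈ T, ∀ t ∈ T, s ≤ t → F s ≤ F t
  /-- the probability measure -/
  P : Measure Ω
  P_prob : IsProbabilityMeasure P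
  /-- the time-shift maps on the noise space -/
  θ : ℝ → Ω → Ω
  θ_zero : θ 0 = id
  θ_add : ∀ s ∈ T, ∀ t ∈ T, θ (s + t) = θ t ∘ θ s
  θ_preserving : ∀ t ∈ T, MeasurePreserving (θ t) P P
  θ_adapted : ∀ s ∈ T, ∀ t ∈ T, @Measurable Ω Ω (F (s + t)) (F s) (θ t)
  θ_indep : ∀ t ∈ T, ∀ E A : Set Ω, MeasurableSet[F t] E →
    MeasurableSet[⨆ s ∈ T, F s] A → P (E ∩ θ t ⁻¹' A) = P E * P A
  /-- the random homeomorphisms -/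
  φ : ℝ → Ω → UnitAddCircle ≃ₜ UnitAddCircle
  φ_orient : ∀ t ∈ T, ∀ ω, OrientPreserving (φ t ω)
  φ_meas : ∀ t ∈ T, @Measurable (Ω × UnitAddCircle) UnitAddCircle
    ((F t).prod inferInstance) inferInstance (fun p => φ t p.1 p.2)
  φ_zero : ∀ ω, φ 0 ω = Homeomorph.refl UnitAddCircle
  φ_cocycle : ∀ s ∈ T, ∀ t ∈ T, ∀ ω x, φ (s + t) ω x = φ t (θ s ω) (φ s ω x)
  φ_cadlag_right : ∀ ω, ∀ t ∈ T, ∀ tn : ℕ → ℝ, (∀ n, tn n ∈ T) → Antitone tn →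
    Tendsto tn atTop (𝓝 t) → ∀ (xn : ℕ → UnitAddCircle) (x : UnitAddCircle),
      Tendsto xn atTop (𝓝 x) →
      Tendsto (fun n => φ (tn n) ω (xn n)) atTop (𝓝 (φ t ω x))
  /-- the left-limit maps -/
  φ_left_lim : ℝ → Ω → UnitAddCircle → UnitAddCircle
  φ_cadlag_left : ∀ ω, ∀ t ∈ T, ∀ tn : ℕ → ℝ, (∀ n, tn n ∈ T) → StrictMono tn →
    Tendsto tn atTop (𝓝 t) → ∀ (xn : ℕ → UnitAddCircle) (x : UnitAddCircle),
      Tendsto xn atTop (𝓝 x) →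
      Tendsto (fun n => φ (tn n) ω (xn n)) atTop (𝓝 (φ_left_lim t ω x))

/-- A probability measure on the circle is atomless if every singleton is null. -/
def Atomless (ρ : Measure UnitAddCircle) : Prop := ∀ x, ρ {x} = 0

/-- A measure on the circle has full support. -/
def FullSupport (ρ : Measure UnitAddCircle) : Prop :=
  ∀ U : Set UnitAddCircle, IsOpen U → U.Nonempty → 0 < ρ U

/-- The (topological) support of a measure on the circle. -/
def msupport (ρ : Measure UnitAddCircle) : Set UnitAddCircle :=
  {x | ∀ U : Set UnitAddCircle, IsOpen U → x ∈ U → 0 < ρ U}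

namespace RDS

variable {Ω : Type} [m : MeasurableSpace Ω] (S : RDS Ω)

/-- the future σ-algebra `𝓕₊ = σ(𝓕_t : t ∈ 𝕋⁺)`. -/
def Fplus : MeasurableSpace Ω := ⨆ t ∈ S.T, S.F t

/-- The filter "t → ∞ along the time set 𝕋⁺". -/
def tFilter : Filter ℝ := atTop ⊓ 𝓟 S.T

/-- two-point contractibility. -/
def Contractible : Prop := ∀ x y : UnitAddCircle, x ≠ y →
  0 < S.P {ω | ∃ t ∈ S.T, dist (S.φ t ω x) (S.φ t ω y) < dist x y}

/-- compressibility. -/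
def Compressible : Prop := ∀ x y : UnitAddCircle, x ≠ y →
  0 < S.P {ω | ∃ t ∈ S.T, dPlus (S.φ t ω x) (S.φ t ω y) < dPlus x y}

/-- `p` is a deterministic fixed point. -/
def DetFixedPoint (p : UnitAddCircle) : Prop :=
  ∀ᵐ ω ∂S.P, ∀ t ∈ S.T, S.φ t ω p = p

/-- `A` is forward-invariant. -/
def ForwardInvariant (A : Set UnitAddCircle) : Prop :=
  ∀ᵐ ω ∂S.P, ∀ t ∈ S.T, ⇑(S.φ t ω) '' A ⊆ A

/-- reverse-minimal dynamics: the only open forward-invariant sets are `∅` and `𝕊¹`. -/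
def ReverseMinimal : Prop :=
  ∀ A : Set UnitAddCircle, IsOpen A → S.ForwardInvariant A → A = ∅ ∨ A = Set.univ

/-- synchronisation. -/
def Synchronising : Prop := ∀ x y : UnitAddCircle,
  S.P {ω | Tendsto (fun t => dist (S.φ t ω x) (S.φ t ω y)) S.tFilter (𝓝 0)} = 1

/-- everywhere local stability. -/
def EverywhereLocallyStable : Prop := ∀ x : UnitAddCircle,
  S.P {ω | ∃ U : Set UnitAddCircle, IsOpen U ∧ x ∈ U ∧
    Tendsto (fun t => volume (⇑(S.φ t ω) '' U)) S.tFilter (𝓝 0)} = 1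

/-- stable synchronisation. -/
def StablySynchronising : Prop := S.Synchronising ∧ S.EverywhereLocallyStable

/-- `ρ` is reverse-stationary: `ρ(A) = ∫ ρ(φ(t,ω)A) ℙ(dω)` for all `t ∈ 𝕋⁺`, Borel `A`. -/
def ReverseStationary (ρ : Measure UnitAddCircle) : Prop :=
  ∀ t ∈ S.T, ∀ A : Set UnitAddCircle, MeasurableSet A →
    ρ A = ∫⁻ ω, ρ (⇑(S.φ t ω) '' A) ∂S.P

/-- `r` is a crack point of `ω`. -/
def CrackPoint (ω : Ω) (r : UnitAddCircle) : Prop :=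
  ∀ G : Set UnitAddCircle, IsClosed G → r ∉ G →
    Tendsto (fun t => volume (⇑(S.φ t ω) '' G)) S.tFilter (𝓝 0)

/-- the set of contractive sample points. -/
def Ωc : Set Ω := {ω | ∃ r, S.CrackPoint ω r}

/-- the reverse transition probabilities `φ̄ₓᵗ(A) = ℙ(ω : φ(t,ω)⁻¹(x) ∈ A)`. -/
def revTrans (t : ℝ) (x : UnitAddCircle) (A : Set UnitAddCircle) : ℝ≥0∞ :=
  S.P {ω | (S.φ t ω).symm x ∈ A}

/-- the forward transition probabilities `φₓᵗ(A) = ℙ(ω : φ(t,ω)x ∈ A)`. -/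
def fwdTrans (t : ℝ) (x : UnitAddCircle) (A : Set UnitAddCircle) : ℝ≥0∞ :=
  S.P {ω | S.φ t ω x ∈ A}

/-- `ρ` is stationary for a transition family `ν`. -/
def StationaryFor (ν : ℝ → UnitAddCircle → Set UnitAddCircle → ℝ≥0∞)
    (ρ : Measure UnitAddCircle) : Prop :=
  ∀ t ∈ S.T, ∀ A : Set UnitAddCircle, MeasurableSet A → ρ A = ∫⁻ x, ν t x A ∂ρ

/-- `ρ` is ergodic for a transition family `ν`. -/
def ErgodicFor (ν : ℝ → UnitAddCircle → Set UnitAddCircle → ℝ≥0∞)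
    (ρ : Measure UnitAddCircle) : Prop :=
  S.StationaryFor ν ρ ∧ ∀ A : Set UnitAddCircle, MeasurableSet A →
    (∀ t ∈ S.T, ∀ᵐ x ∂ρ, x ∈ A → ν t x A = 1) → ρ A = 0 ∨ ρ A = 1

end RDS

namespace SS
open RDS

lemma proj_dist_le (u v : ℝ) : dist (circleProj u) (circleProj v) ≤ |u - v| := by
  rw [dist_eq_norm]
  have : circleProj u - circleProj v = ((u - v : ℝ) : UnitAddCircle) := by
    simp [circleProj]
  rw [this, UnitAddCircle.norm_eq]
  simpa using round_le (u - v) 0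

lemma proj_dist_ge {u v δ : ℝ} (h1 : u ≤ v) (h2 : v ≤ u + 1)
    (h : dist (circleProj u) (circleProj v) < δ) : v - u < δ ∨ u + 1 - v < δ := by
  rw [dist_comm, dist_eq_norm] at h
  have : circleProj v - circleProj u = ((v - u : ℝ) : UnitAddCircle) := by
    simp [circleProj]
  rw [this, UnitAddCircle.norm_eq, abs_sub_round_eq_min] at h
  rcases eq_or_lt_of_le h2 with h3 | h3
  · right
    have h0 : (0:ℝ) < δ := by
      refine lt_of_le_of_lt ?_ h
      exact le_min (Int.fract_nonneg _) (by linarith [Int.fract_lt_one (v - u)])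
    linarith
  · have hf : Int.fract (v - u) = v - u := Int.fract_eq_self.2 ⟨by linarith, by linarith⟩
    rw [hf] at h
    rcases min_lt_iff.1 h with h | h
    · left; exact h
    · right; linarith

lemma arc_eq (u v : ℝ) :
    circleProj '' Icc u v = Metric.closedBall (circleProj ((u+v)/2)) ((v-u)/2) ∨ v < u := by
  by_cases hlt : v < u
  · exact Or.inr hlt
  left
  have key := AddCircle.coe_real_preimage_closedBall_eq_iUnion (1:ℝ) ((u+v)/2) ((v-u)/2)
  ext z
  constructor
  · rintro ⟨w, hw, rfl⟩
    have : dist (circleProj w) (circleProj ((u+v)/2)) ≤ |w - (u+v)/2| := proj_dist_le _ _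
    refine le_trans this ?_
    rw [abs_le]; constructor <;> linarith [hw.1, hw.2]
  · obtain ⟨w, rfl⟩ := QuotientAddGroup.mk_surjective z
    intro hz
    have hw : w ∈ ((↑) : ℝ → AddCircle (1:ℝ)) ⁻¹' Metric.closedBall (((u+v)/2 : ℝ) : AddCircle (1:ℝ)) ((v-u)/2) := hz
    rw [key] at hw
    obtain ⟨n, hn⟩ := mem_iUnion.1 hw
    rw [Metric.mem_closedBall, Real.dist_eq, abs_le] at hn
    simp at hn
    refine ⟨w - n, ⟨by linarith, by linarith⟩, ?_⟩
    have : circleProj (w - n) = (w : AddCircle (1:ℝ)) := by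
      simp only [circleProj, AddCircle.coe_sub]
      rw [sub_eq_self]
      have := AddCircle.coe_eq_zero_iff (p := (1:ℝ)) (x := (n:ℝ))
      exact this.2 ⟨n, by simp⟩
    exact this

lemma arc_vol {u v : ℝ} (h1 : u ≤ v) (h2 : v ≤ u + 1) :
    volume (circleProj '' Icc u v) = ENNReal.ofReal (v - u) := by
  rcases arc_eq u v with h | h
  · rw [h, AddCircle.volume_closedBall]
    congr 1
    rw [min_eq_right] <;> linarith
  · linarith

lemma arc_closed (u v : ℝ) : IsClosed (circleProj '' Icc u v) := by
  have hc : Continuous circleProj := AddCircle.continuous_mk' (1:ℝ)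
  exact (isCompact_Icc.image hc).isClosed

lemma arc_dist {u v : ℝ} {p q : UnitAddCircle} (hp : p ∈ circleProj '' Icc u v)
    (hq : q ∈ circleProj '' Icc u v) : dist p q ≤ v - u := by
  obtain ⟨p, hp, rfl⟩ := hp
  obtain ⟨q, hq, rfl⟩ := hq
  refine (proj_dist_le _ _).trans ?_
  rw [abs_le]; constructor <;> linarith [hp.1, hp.2, hq.1, hq.2]

lemma arc_union {a b : ℝ} (hab : a ≤ b) (hb : b ≤ a + 1) :
    circleProj '' Icc a b ∪ circleProj '' Icc b (a+1) = univ := by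
  rw [← image_union, Icc_union_Icc_eq_Icc hab hb]
  exact AddCircle.coe_image_Icc_eq (1:ℝ) a

/-- image of a pair of complementary arcs -/
lemma arc_image {f : UnitAddCircle ≃ₜ UnitAddCircle} (hf : OrientPreserving f)
    {a b : ℝ} (hab : a ≤ b) (hb : b ≤ a + 1) :
    ∃ u v : ℝ, u ≤ v ∧ v ≤ u + 1 ∧ f (circleProj a) = circleProj u ∧
      f (circleProj b) = circleProj v ∧
      f '' (circleProj '' Icc a b) = circleProj '' Icc u v ∧
      f '' (circleProj '' Icc b (a+1)) = circleProj '' Icc v (u+1) := by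
  obtain ⟨F, hF, hF1, hFp⟩ := hf
  have hFn : ∀ (n : ℤ) x, F (x + n) = F x + n := by
    intro n
    induction n using Int.induction_on with
    | zero => simp
    | succ n ih =>
      intro x
      push_cast
      rw [← add_assoc, hF1]
      have := ih x
      push_cast at this
      rw [this]; ring
    | pred n ih =>
      intro x
      have h := hF1 (x + ((-(n:ℤ) - 1 : ℤ) : ℝ))
      have h2 := ih x
      push_cast at h h2 ⊢
      have e : x + (-(n:ℝ) - 1) + 1 = x + -(n:ℝ) := by ring
      rw [e, h2] at h
      linarith
  have hsurj : Function.Surjective F := by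
    intro y
    obtain ⟨z, hz⟩ := f.surjective (circleProj y)
    obtain ⟨x, rfl⟩ := QuotientAddGroup.mk_surjective z
    have h : circleProj (F x) = circleProj y := by rw [← hFp]; exact hz
    have h2 : ((F x : ℝ) : AddCircle (1:ℝ)) = (y : AddCircle (1:ℝ)) := h
    rw [← sub_eq_zero, ← AddCircle.coe_sub, AddCircle.coe_eq_zero_iff] at h2
    obtain ⟨n, hn⟩ := h2
    refine ⟨x + ((-n : ℤ) : ℝ), ?_⟩
    rw [hFn]; simp at hn ⊢; linarith
  have himg : ∀ c d, F '' Icc c d = Icc (F c) (F d) := by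
    intro c d
    have := (hF.orderIsoOfSurjective F hsurj).image_Icc c d
    simpa using this
  have hpi : ∀ c d, f '' (circleProj '' Icc c d) = circleProj '' Icc (F c) (F d) := by
    intro c d
    rw [← himg, image_image, image_image]
    simp [hFp]
  refine ⟨F a, F b, hF.monotone hab, ?_, hFp a, hFp b, hpi _ _, ?_⟩
  · rw [← hF1]; exact hF.monotone hb
  · rw [hpi, hF1]


lemma dist_ext {X : Type*} [MetricSpace X] {f : X → X} (hf : Continuous f) {D K : Set X}
    (hK : K ⊆ closure D) {c : ℝ} (h : ∀ p ∈ D, ∀ q ∈ D, dist (f p) (f q) ≤ c) :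
    ∀ p ∈ K, ∀ q ∈ K, dist (f p) (f q) ≤ c := by
  intro p hp q hq
  have h1 : ∀ p ∈ D, dist (f p) (f q) ≤ c := by
    intro p hp
    have hc : IsClosed {q | dist (f p) (f q) ≤ c} :=
      isClosed_le (continuous_const.dist hf) continuous_const
    exact hc.closure_subset_iff.2 (h p hp) (hK hq)
  have hc : IsClosed {p | dist (f p) (f q) ≤ c} :=
    isClosed_le (hf.dist continuous_const) continuous_const
  exact hc.closure_subset_iff.2 h1 (hK hp)

lemma meas_sec {Ω : Type} {mm : MeasurableSpace Ω} {f : Ω × UnitAddCircle → UnitAddCircle}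
    (hf : Measurable f) (p : UnitAddCircle) : Measurable (fun ω => f (ω, p)) :=
  hf.comp measurable_prodMk_right

lemma meas_dist {Ω : Type} {mm : MeasurableSpace Ω} {f g : Ω → UnitAddCircle}
    (hf : Measurable f) (hg : Measurable g) (c : ℝ) :
    MeasurableSet {ω | dist (f ω) (g ω) ≤ c} :=
  measurableSet_le (hf.dist hg) measurable_const

section
variable {Ω : Type} [m : MeasurableSpace Ω] (S : RDS Ω)

lemma nat_mem (n : ℕ) : (n : ℝ) ∈ S.T := by
  rcases S.T_cases with h | h <;> rw [h]
  · exact ⟨n, rfl⟩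
  · exact mem_Ici.2 (Nat.cast_nonneg n)

lemma T_nonneg {t : ℝ} (ht : t ∈ S.T) : 0 ≤ t := by
  rcases S.T_cases with h | h <;> rw [h] at ht
  · obtain ⟨n, rfl⟩ := ht; exact Nat.cast_nonneg n
  · exact ht

lemma T_sub {t : ℝ} (ht : t ∈ S.T) (n : ℕ) (hn : (n:ℝ) ≤ t) : t - n ∈ S.T := by
  rcases S.T_cases with h | h <;> rw [h] at ht ⊢
  · obtain ⟨k, rfl⟩ := ht
    have : n ≤ k := Nat.cast_le.1 hn
    exact ⟨k - n, by push_cast [this]; ring⟩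
  · exact sub_nonneg.2 hn

lemma exists_Q : ∃ Q : Set ℝ, Q.Countable ∧ Q ⊆ S.T ∧ ∀ t ∈ S.T, ∃ tn : ℕ → ℝ,
    (∀ n, tn n ∈ Q) ∧ Antitone tn ∧ Tendsto tn atTop (𝓝 t) := by
  rcases S.T_cases with h | h
  · refine ⟨S.T, ?_, subset_rfl, fun t ht => ⟨fun _ => t, fun _ => ht, antitone_const,
      tendsto_const_nhds⟩⟩
    rw [h]; exact countable_range _
  · refine ⟨S.T ∩ range ((↑) : ℚ → ℝ), (countable_range _).mono inter_subset_right,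
      inter_subset_left, fun t ht => ?_⟩
    obtain ⟨u, hu, hut, hlim⟩ := Real.exists_seq_rat_strictAnti_tendsto t
    refine ⟨fun n => u n, fun n => ⟨?_, mem_range_self _⟩, ?_, hlim⟩
    · rw [h]; exact (T_nonneg S ht).trans (hut n).le
    · intro a b hab
      exact Rat.cast_le.2 (hu.antitone hab)

/-- the set of sample points contracting the set `K` -/
def Con (K : Set UnitAddCircle) : Set Ω :=
  {ω | ∀ k : ℕ, ∃ N : ℕ, ∀ t ∈ S.T, (N : ℝ) ≤ t → ∀ p ∈ K, ∀ q ∈ K,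
    dist (S.φ t ω p) (S.φ t ω q) ≤ 1 / ((k : ℝ) + 1)}

lemma Con_anti {K L : Set UnitAddCircle} (h : K ⊆ L) : Con S L ⊆ Con S K := by
  intro ω hω k
  obtain ⟨N, hN⟩ := hω k
  exact ⟨N, fun t ht hNt p hp q hq => hN t ht hNt p (h hp) q (h hq)⟩

lemma meas_pt (t : ℝ) (ht : t ∈ S.T) (p : UnitAddCircle) :
    Measurable[S.F t] (fun ω => S.φ t ω p) := by
  exact meas_sec (S.φ_meas t ht) p

lemma exists_D (K : Set UnitAddCircle) :
    ∃ D : Set UnitAddCircle, D ⊆ K ∧ D.Countable ∧ K ⊆ closure D :=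
  (TopologicalSpace.IsSeparable.of_separableSpace K).exists_countable_dense_subset

lemma F_le_plus {t : ℝ} (ht : t ∈ S.T) : S.F t ≤ ⨆ s ∈ S.T, S.F s :=
  le_iSup₂ (f := fun s (_ : s ∈ S.T) => S.F s) t ht

lemma Con_meas (K : Set UnitAddCircle) : MeasurableSet[⨆ s ∈ S.T, S.F s] (Con S K) := by
  obtain ⟨Q, hQc, hQT, hQ⟩ := exists_Q S
  obtain ⟨D, hDK, hDc, hKD⟩ := exists_D K
  have e : Con S K = ⋂ k : ℕ, ⋃ N : ℕ, ⋂ t ∈ {t ∈ Q | (N:ℝ) ≤ t}, ⋂ p ∈ D, ⋂ q ∈ D,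
      {ω | dist (S.φ t ω p) (S.φ t ω q) ≤ 1 / ((k : ℝ) + 1)} := by
    ext ω
    simp only [Con, mem_ofPred_eq, mem_iInter, mem_iUnion]
    refine forall_congr' fun k => exists_congr fun N => ⟨?_, ?_⟩
    · rintro h t ⟨ht, hN⟩ p hp q hq
      exact h t (hQT ht) hN p (hDK hp) q (hDK hq)
    · intro h t ht hN
      obtain ⟨tn, htn, hanti, hlim⟩ := hQ t ht
      have hge : ∀ n, t ≤ tn n := fun n => hanti.le_of_tendsto hlim n
      have step : ∀ p ∈ D, ∀ q ∈ D, dist (S.φ t ω p) (S.φ t ω q) ≤ 1 / ((k : ℝ) + 1) := by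
        intro p hp q hq
        have hp' := S.φ_cadlag_right ω t ht tn (fun n => hQT (htn n)) hanti hlim (fun _ => p) p
          tendsto_const_nhds
        have hq' := S.φ_cadlag_right ω t ht tn (fun n => hQT (htn n)) hanti hlim (fun _ => q) q
          tendsto_const_nhds
        exact le_of_tendsto' (hp'.dist hq') fun n => h _ ⟨htn n, hN.trans (hge n)⟩ p hp q hq
      exact dist_ext (S.φ t ω).continuous hKD step
  rw [e]
  refine MeasurableSet.iInter fun k => MeasurableSet.iUnion fun N =>
    MeasurableSet.biInter (hQc.mono (sep_subset _ _)) fun t ht =>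
    MeasurableSet.biInter hDc fun p hp => MeasurableSet.biInter hDc fun q hq => ?_
  have h1 : Measurable[⨆ s ∈ S.T, S.F s] (fun ω => S.φ t ω p) :=
    (meas_pt S t (hQT ht.1) p).mono (F_le_plus S (hQT ht.1)) le_rfl
  have h2 : Measurable[⨆ s ∈ S.T, S.F s] (fun ω => S.φ t ω q) :=
    (meas_pt S t (hQT ht.1) q).mono (F_le_plus S (hQT ht.1)) le_rfl
  exact meas_dist h1 h2 _

lemma plus_le : (⨆ s ∈ S.T, S.F s) ≤ m := iSup₂_le S.F_le

lemma eventually_tFilter {p : ℝ → Prop} :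
    (∀ᶠ t in S.tFilter, p t) ↔ ∃ N : ℕ, ∀ t ∈ S.T, (N:ℝ) ≤ t → p t := by
  unfold RDS.tFilter
  rw [eventually_inf_principal, eventually_atTop]
  constructor
  · rintro ⟨a, ha⟩
    obtain ⟨N, hN⟩ := exists_nat_ge a
    exact ⟨N, fun t ht h => ha t (hN.trans h) ht⟩
  · rintro ⟨N, hN⟩
    exact ⟨N, fun t h ht => hN t ht h⟩

lemma T_eventually : ∀ᶠ t in S.tFilter, t ∈ S.T :=
  (eventually_tFilter S).2 ⟨0, fun t ht _ => ht⟩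

instance tFilter_neBot : S.tFilter.NeBot := by
  rw [neBot_iff]
  intro h
  have : ∀ᶠ t in S.tFilter, False := by rw [h]; exact eventually_bot
  obtain ⟨N, hN⟩ := (eventually_tFilter S).1 this
  exact hN N (nat_mem S N) le_rfl

lemma Con_vol {K : Set UnitAddCircle} {ω : Ω} (h : ω ∈ Con S K) :
    Tendsto (fun t => volume (S.φ t ω '' K)) S.tFilter (𝓝 0) := by
  rcases K.eq_empty_or_nonempty with rfl | ⟨p, hp⟩
  · simp
  rw [ENNReal.tendsto_nhds_zero]
  intro ε hε
  obtain ⟨k, hk⟩ : ∃ k : ℕ, ENNReal.ofReal (2 * (1 / ((k:ℝ) + 1))) < ε := by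
    have h1 : Tendsto (fun k : ℕ => ENNReal.ofReal (2 * (1 / ((k:ℝ) + 1)))) atTop (𝓝 0) := by
      have := (tendsto_one_div_add_atTop_nhds_zero_nat (𝕜 := ℝ)).const_mul 2
      simpa using (ENNReal.tendsto_ofReal this)
    exact (h1.eventually (gt_mem_nhds hε)).exists
  obtain ⟨N, hN⟩ := h k
  refine (eventually_tFilter S).2 ⟨N, fun t ht hNt => le_trans ?_ hk.le⟩
  have : S.φ t ω '' K ⊆ Metric.closedBall (S.φ t ω p) (1 / ((k:ℝ) + 1)) := by
    rintro _ ⟨q, hq, rfl⟩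
    exact hN t ht hNt q hq p hp
  refine (measure_mono this).trans ?_
  rw [AddCircle.volume_closedBall]
  exact ENNReal.ofReal_le_ofReal (min_le_right _ _)

/-- distances in the image of an arc are controlled by the volume -/
lemma arc_dist_vol {t : ℝ} (ht : t ∈ S.T) (ω : Ω) {a b : ℝ} (hab : a ≤ b) (hb : b ≤ a + 1)
    {p q : UnitAddCircle} (hp : p ∈ circleProj '' Icc a b) (hq : q ∈ circleProj '' Icc a b) :
    ENNReal.ofReal (dist (S.φ t ω p) (S.φ t ω q)) ≤
      volume (S.φ t ω '' (circleProj '' Icc a b)) := by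
  obtain ⟨u, v, h1, h2, -, -, h3, -⟩ := arc_image (S.φ_orient t ht ω) hab hb
  rw [h3, arc_vol h1 h2]
  refine ENNReal.ofReal_le_ofReal (arc_dist ?_ ?_)
  · rw [← h3]; exact mem_image_of_mem _ hp
  · rw [← h3]; exact mem_image_of_mem _ hq

lemma vol_Con {ω : Ω} {a b : ℝ} (hab : a ≤ b) (hb : b ≤ a + 1)
    (h : Tendsto (fun t => volume (S.φ t ω '' (circleProj '' Icc a b))) S.tFilter (𝓝 0)) :
    ω ∈ Con S (circleProj '' Icc a b) := by
  intro k
  rw [ENNReal.tendsto_nhds_zero] at h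
  have h1 := h (ENNReal.ofReal (1 / ((k:ℝ) + 1))) (by simp; positivity)
  obtain ⟨N, hN⟩ := (eventually_tFilter S).1 h1
  refine ⟨N, fun t ht hNt p hp q hq => ?_⟩
  have := (arc_dist_vol S ht ω hab hb hp hq).trans (hN t ht hNt)
  exact (ENNReal.ofReal_le_ofReal_iff (by positivity)).1 this

lemma Con_shift {K J : Set UnitAddCircle} (n : ℕ) {ω : Ω} (hK : S.φ n ω '' K ⊆ J)
    (h : S.θ n ω ∈ Con S J) : ω ∈ Con S K := by
  intro k
  obtain ⟨N, hN⟩ := h k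
  refine ⟨N + n, fun t ht hNt p hp q hq => ?_⟩
  push_cast at hNt
  have hN0 : (0:ℝ) ≤ N := Nat.cast_nonneg N
  have hs := T_sub S ht n (by linarith)
  have e : ∀ x, S.φ t ω x = S.φ (t - n) (S.θ n ω) (S.φ n ω x) := by
    intro x
    rw [← S.φ_cocycle n (nat_mem S n) _ hs]
    congr 2; ring
  rw [e, e]
  exact hN _ hs (by linarith) _ (hK (mem_image_of_mem _ hp)) _ (hK (mem_image_of_mem _ hq))

lemma E_meas (K : Set UnitAddCircle) (n : ℕ) {J : Set UnitAddCircle} (hJ : IsClosed J) :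
    MeasurableSet[S.F n] {ω | S.φ n ω '' K ⊆ J} := by
  obtain ⟨D, hDK, hDc, hKD⟩ := exists_D K
  have e : {ω | S.φ n ω '' K ⊆ J} = ⋂ p ∈ D, (fun ω => S.φ n ω p) ⁻¹' J := by
    ext ω
    simp only [mem_ofPred_eq, mem_iInter, mem_preimage]
    constructor
    · intro h p hp; exact h (mem_image_of_mem _ (hDK hp))
    · rintro h _ ⟨p, hp, rfl⟩
      have : closure D ⊆ S.φ n ω ⁻¹' J :=
        (hJ.preimage (S.φ n ω).continuous).closure_subset_iff.2 h
      exact this (hKD hp)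
  rw [e]
  exact MeasurableSet.biInter hDc fun p _ => meas_pt S n (nat_mem S n) p hJ.measurableSet

def filt : Filtration ℕ m where
  seq n := S.F n
  mono' i j h := S.F_mono _ (nat_mem S i) _ (nat_mem S j) (by exact_mod_cast h)
  le' n := S.F_le _ (nat_mem S n)

lemma plus_eq : (⨆ s ∈ S.T, S.F s) = ⨆ n, filt S n := by
  apply le_antisymm
  · refine iSup₂_le fun t ht => ?_
    obtain ⟨n, hn⟩ := exists_nat_ge t
    exact (S.F_mono t ht n (nat_mem S n) hn).trans (le_iSup (fun n => (filt S n : MeasurableSpace Ω)) n)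
  · exact iSup_le fun n => F_le_plus S (nat_mem S n)

lemma condExp_ge (K : Set UnitAddCircle) (n : ℕ) {J : Set UnitAddCircle} (hJ : IsClosed J)
    (hP : 1/2 ≤ S.P.real (Con S J)) :
    ∀ᵐ ω ∂S.P, S.φ n ω '' K ⊆ J →
      1/2 ≤ (S.P[(Con S K).indicator (fun _ => (1:ℝ)) | S.F n]) ω := by
  have := S.P_prob
  have hn := nat_mem S n
  have hle := S.F_le _ hn
  set E := {ω | S.φ n ω '' K ⊆ J} with hE
  have hEm : MeasurableSet[S.F n] E := E_meas S K n hJ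
  set C := S.θ n ⁻¹' Con S J with hC
  have hmp := S.θ_preserving n hn
  have hCJ : MeasurableSet (Con S J) := plus_le S _ (Con_meas S J)
  have hCK : MeasurableSet (Con S K) := plus_le S _ (Con_meas S K)
  have hCm : MeasurableSet C := hmp.measurable hCJ
  have hm1le : (⨆ s ∈ S.T, S.F s).comap (S.θ n) ≤ m := by
    rw [← measurable_iff_comap_le]
    exact hmp.measurable.mono le_rfl (plus_le S)
  have hind : ProbabilityTheory.Indep ((⨆ s ∈ S.T, S.F s).comap (S.θ n)) (S.F n) S.P := by
    rw [ProbabilityTheory.Indep_iff]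
    rintro _ t2 ⟨A, hA, rfl⟩ h2
    rw [inter_comm, S.θ_indep n hn t2 A h2 hA, mul_comm,
      hmp.measure_preimage (plus_le S _ hA).nullMeasurableSet]
  have hsm : StronglyMeasurable[(⨆ s ∈ S.T, S.F s).comap (S.θ n)] (C.indicator (fun _ => (1:ℝ))) :=
    StronglyMeasurable.indicator stronglyMeasurable_const ⟨_, Con_meas S J, rfl⟩
  have h1 := condExp_indep_eq hm1le hle hsm hind
  have hint : Integrable (C.indicator (fun _ => (1:ℝ))) S.P :=
    (integrable_const 1).indicator hCm
  have h2 := condExp_indicator (m := S.F n) hint hEm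
  have h3 : S.P[E.indicator (C.indicator (fun _ => (1:ℝ))) | S.F n] ≤ᵐ[S.P]
      S.P[(Con S K).indicator (fun _ => (1:ℝ)) | S.F n] := by
    refine condExp_mono (hint.indicator (hle _ hEm)) ((integrable_const 1).indicator hCK) ?_
    refine Eventually.of_forall fun ω => ?_
    by_cases hω : ω ∈ E
    · by_cases hω2 : ω ∈ C
      · have : ω ∈ Con S K := Con_shift S n hω hω2
        simp [hω, hω2, this]
      · simp [hω, hω2, indicator_nonneg]
    · simp [hω, indicator_nonneg]
  filter_upwards [h1, h2, h3] with ω g1 g2 g3 hω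
  rw [g2, indicator_of_mem (show ω ∈ E from hω), g1, integral_indicator hCm] at g3
  refine le_trans ?_ g3
  have : S.P.real C = S.P.real (Con S J) := by
    simp only [measureReal_def]; rw [hmp.measure_preimage hCJ.nullMeasurableSet]
  simp [this]; linarith

lemma levy (K : Set UnitAddCircle) {ι : Type} [Countable ι] (J : ι → Set UnitAddCircle)
    (hJ : ∀ i, IsClosed (J i)) (hP : ∀ i, 1/2 ≤ S.P.real (Con S (J i))) :
    ∀ᵐ ω ∂S.P, (∃ᶠ n : ℕ in atTop, ∃ i, S.φ n ω '' K ⊆ J i) → ω ∈ Con S K := by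
  have := S.P_prob
  have h1 : ∀ᵐ ω ∂S.P, ∀ i, ∀ n : ℕ, S.φ n ω '' K ⊆ J i →
      1/2 ≤ (S.P[(Con S K).indicator (fun _ => (1:ℝ)) | S.F n]) ω := by
    rw [ae_all_iff]; intro i; rw [ae_all_iff]; intro n
    exact condExp_ge S K n (hJ i) (hP i)
  have h2 := tendsto_ae_condExp (μ := S.P) (ℱ := filt S) ((Con S K).indicator (fun _ => (1:ℝ)))
  have hCK : MeasurableSet (Con S K) := plus_le S _ (Con_meas S K)
  rw [← plus_eq] at h2
  rw [condExp_of_stronglyMeasurable (plus_le S)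
    (StronglyMeasurable.indicator stronglyMeasurable_const (Con_meas S K))
    ((integrable_const 1).indicator hCK)] at h2
  filter_upwards [h1, h2] with ω g1 g2 hf
  by_contra hω
  rw [indicator_of_notMem hω] at g2
  have : ∀ᶠ n : ℕ in atTop, (S.P[(Con S K).indicator (fun _ => (1:ℝ)) | S.F n]) ω < 1/2 :=
    g2.eventually (gt_mem_nhds (by norm_num))
  obtain ⟨n, ⟨i, hi⟩, hn⟩ := (hf.and_eventually this).exists
  linarith [g1 i n hi]
end

lemma meas_le_of {α : Type*} {mm : MeasurableSpace α} {μ : Measure α} {A B N : Set α}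
    (hN : μ N = 0) (h : A ⊆ B ∪ N) : μ A ≤ μ B := by
  calc μ A ≤ μ (B ∪ N) := measure_mono h
    _ ≤ μ B + μ N := measure_union_le _ _
    _ = μ B := by rw [hN, add_zero]

section
variable {Ω : Type} [m : MeasurableSpace Ω] (S : RDS Ω)

lemma ball_arc (c : ℝ) {ρ : ℝ} (hρ : 0 ≤ ρ) :
    Metric.closedBall (circleProj c) ρ = circleProj '' Icc (c - ρ) (c + ρ) := by
  rcases arc_eq (c - ρ) (c + ρ) with h | h
  · rw [h]; congr 2 <;> ring
  · linarith

/-- closed ball of radius `1/(n+2)` -/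
def cb (x : UnitAddCircle) (n : ℕ) : Set UnitAddCircle :=
  Metric.closedBall x (1 / ((n:ℝ) + 2))

lemma cb_anti (x : UnitAddCircle) {i j : ℕ} (h : i ≤ j) : cb x j ⊆ cb x i := by
  apply Metric.closedBall_subset_closedBall
  have : (i:ℝ) ≤ j := by exact_mod_cast h
  gcongr

lemma proj_surj (x : UnitAddCircle) : ∃ c : ℝ, circleProj c = x :=
  QuotientAddGroup.mk_surjective x

lemma stable_sub (x : UnitAddCircle) :
    {ω | ∃ U : Set UnitAddCircle, IsOpen U ∧ x ∈ U ∧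
      Tendsto (fun t => volume (⇑(S.φ t ω) '' U)) S.tFilter (𝓝 0)} ⊆ ⋃ n, Con S (cb x n) := by
  rintro ω ⟨U, hU, hx, h⟩
  obtain ⟨ε, hε, hεU⟩ := Metric.isOpen_iff.1 hU x hx
  obtain ⟨n, hn⟩ := exists_nat_one_div_lt hε
  have hsub : cb x n ⊆ U := by
    refine subset_trans ?_ hεU
    apply Metric.closedBall_subset_ball
    refine lt_of_le_of_lt ?_ hn
    gcongr; norm_num
  refine mem_iUnion.2 ⟨n, ?_⟩
  obtain ⟨c, rfl⟩ := proj_surj x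
  have h2 : Tendsto (fun t => volume (⇑(S.φ t ω) '' (cb (circleProj c) n))) S.tFilter (𝓝 0) :=
    tendsto_of_tendsto_of_tendsto_of_le_of_le tendsto_const_nhds h (fun _ => zero_le)
      (fun t => measure_mono (image_mono hsub))
  have hn0 : (0:ℝ) ≤ 1 / ((n:ℝ) + 2) := by positivity
  have hn1 : 1 / ((n:ℝ) + 2) ≤ 1 / 2 := by
    apply one_div_le_one_div_of_le <;> linarith [(Nat.cast_nonneg n : (0:ℝ) ≤ n)]
  rw [cb, ball_arc _ hn0] at h2 ⊢
  exact vol_Con S (by linarith) (by linarith) h2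

lemma stable_meas (x : UnitAddCircle) : MeasurableSet (⋃ n, Con S (cb x n)) :=
  MeasurableSet.iUnion fun n => plus_le S _ (Con_meas S _)

lemma stable_one (hS : S.EverywhereLocallyStable) (x : UnitAddCircle) :
    S.P (⋃ n, Con S (cb x n)) = 1 := by
  have := S.P_prob
  refine le_antisymm prob_le_one ?_
  rw [← hS x]
  exact measure_mono (stable_sub S x)

lemma stable_ball (hS : S.EverywhereLocallyStable) (x : UnitAddCircle) :
    ∃ n, 1/2 ≤ S.P.real (Con S (cb x n)) := by
  have := S.P_prob
  have hmono : Monotone (fun n => Con S (cb x n)) := fun i j h => Con_anti S (cb_anti x h)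
  have h1 := tendsto_measure_iUnion_atTop (μ := S.P) hmono
  rw [stable_one S hS x] at h1
  have h2 := (ENNReal.tendsto_toReal ENNReal.one_ne_top).comp h1
  simp only [ENNReal.toReal_one] at h2
  obtain ⟨n, hn⟩ := (h2.eventually (lt_mem_nhds (show (1/2:ℝ) < 1 by norm_num))).exists
  exact ⟨n, hn.le⟩

lemma exists_cover (hS : S.EverywhereLocallyStable) :
    ∃ (s : Finset UnitAddCircle) (J : s → Set UnitAddCircle) (δ : ℝ), 0 < δ ∧
      (∀ i, IsClosed (J i)) ∧ (∀ i, 1/2 ≤ S.P.real (Con S (J i))) ∧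
      ∀ z, ∃ i, Metric.ball z δ ⊆ J i := by
  choose n hn using stable_ball S hS
  have hpos : ∀ x, (0:ℝ) < 1 / ((n x : ℝ) + 2) := fun x => by positivity
  obtain ⟨s, -, hs⟩ := (isCompact_univ (X := UnitAddCircle)).elim_nhds_subcover
    (fun x => Metric.ball x (1 / ((n x : ℝ) + 2)))
    (fun x _ => Metric.ball_mem_nhds x (hpos x))
  obtain ⟨δ, hδ, h⟩ := lebesgue_number_lemma_of_metric (isCompact_univ (X := UnitAddCircle))
    (c := fun i : s => Metric.ball i.1 (1 / ((n i.1 : ℝ) + 2))) (fun _ => Metric.isOpen_ball)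
    (by intro x hx
        obtain ⟨i, hi, hxi⟩ := mem_iUnion₂.1 (hs hx)
        exact mem_iUnion.2 ⟨⟨i, hi⟩, hxi⟩)
  refine ⟨s, fun i => cb i.1 (n i.1), δ, hδ, fun i => Metric.isClosed_closedBall,
    fun i => hn _, fun z => ?_⟩
  obtain ⟨i, hi⟩ := h z (mem_univ z)
  exact ⟨i, hi.trans Metric.ball_subset_closedBall⟩

lemma sync_nat (hS : S.Synchronising) (x y : UnitAddCircle) :
    ∀ᵐ ω ∂S.P, Tendsto (fun n : ℕ => dist (S.φ n ω x) (S.φ n ω y)) atTop (𝓝 0) := by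
  have := S.P_prob
  have hm : ∀ z, ∀ n : ℕ, Measurable (fun ω => S.φ n ω z) := fun z n =>
    (meas_pt S n (nat_mem S n) z).mono (S.F_le _ (nat_mem S n)) le_rfl
  have hms : MeasurableSet {ω | Tendsto (fun n : ℕ => dist (S.φ n ω x) (S.φ n ω y)) atTop (𝓝 0)} :=
    measurableSet_tendsto (𝓝 0) fun n => (hm x n).dist (hm y n)
  have h1 : S.P {ω | Tendsto (fun n : ℕ => dist (S.φ n ω x) (S.φ n ω y)) atTop (𝓝 0)} = 1 := by
    refine le_antisymm prob_le_one ?_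
    rw [← hS x y]
    refine measure_mono fun ω hω => ?_
    refine Tendsto.comp (f := fun n : ℕ => (n:ℝ)) hω ?_
    exact tendsto_inf.2 ⟨tendsto_natCast_atTop_atTop,
      tendsto_principal.2 (Eventually.of_forall (nat_mem S))⟩
  exact (mem_ae_iff_prob_eq_one hms).2 h1

lemma dichotomy (hS : S.StablySynchronising) {a b : ℝ} (hab : a ≤ b) (hb : b ≤ a + 1) :
    ∀ᵐ ω ∂S.P, ω ∈ Con S (circleProj '' Icc a b) ∨ ω ∈ Con S (circleProj '' Icc b (a+1)) := by
  obtain ⟨s, J, δ, hδ, hJ, hP, hcov⟩ := exists_cover S hS.2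
  filter_upwards [levy S (circleProj '' Icc a b) J hJ hP,
    levy S (circleProj '' Icc b (a+1)) J hJ hP,
    sync_nat S hS.1 (circleProj a) (circleProj b)] with ω h1 h2 h3
  have h4 : ∀ᶠ n : ℕ in atTop, (∃ i, S.φ n ω '' (circleProj '' Icc a b) ⊆ J i) ∨
      (∃ i, S.φ n ω '' (circleProj '' Icc b (a+1)) ⊆ J i) := by
    filter_upwards [h3.eventually (gt_mem_nhds hδ)] with n hn
    obtain ⟨u, v, huv, hvu, ea, eb, e1, e2⟩ := arc_image (S.φ_orient n (nat_mem S n) ω) hab hb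
    rw [ea, eb] at hn
    rcases proj_dist_ge huv hvu hn with h | h
    · left
      obtain ⟨i, hi⟩ := hcov (circleProj u)
      refine ⟨i, subset_trans ?_ hi⟩
      rw [e1]
      intro p hp
      exact lt_of_le_of_lt (arc_dist hp (mem_image_of_mem _ ⟨le_rfl, huv⟩)) h
    · right
      obtain ⟨i, hi⟩ := hcov (circleProj v)
      refine ⟨i, subset_trans ?_ hi⟩
      rw [e2]
      intro p hp
      exact lt_of_le_of_lt (arc_dist hp (mem_image_of_mem _ ⟨le_rfl, hvu⟩)) h
  rcases frequently_or_distrib.1 h4.frequently with h | h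
  · exact Or.inl (h1 h)
  · exact Or.inr (h2 h)

lemma not_both {ω : Ω} {A B : Set UnitAddCircle} (hAB : A ∪ B = univ)
    (hA : Tendsto (fun t => volume (⇑(S.φ t ω) '' A)) S.tFilter (𝓝 0))
    (hB : Tendsto (fun t => volume (⇑(S.φ t ω) '' B)) S.tFilter (𝓝 0)) : False := by
  have h := hA.add hB
  rw [add_zero] at h
  have h1 : ∀ t, (1:ℝ≥0∞) ≤ volume (⇑(S.φ t ω) '' A) + volume (⇑(S.φ t ω) '' B) := by
    intro t
    refine le_trans ?_ (measure_union_le _ _)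
    rw [← image_union, hAB, image_univ, (S.φ t ω).surjective.range_eq]
    simp
  have := ge_of_tendsto' h h1
  simp at this

lemma vol_grid {ω : Ω} (n : ℕ)
    (h : ∀ k : ℕ, k < n + 1 →
      ω ∈ Con S (circleProj '' Icc ((k:ℝ)/(n+1)) (((k:ℝ)+1)/(n+1)))) : False := by
  have key : ∀ j : ℕ, j ≤ n + 1 → Tendsto
      (fun t => volume (⇑(S.φ t ω) '' (circleProj '' Icc 0 ((j:ℝ)/(n+1))))) S.tFilter (𝓝 0) := by
    intro j
    induction j with
    | zero =>
      intro _
      refine Con_vol S fun k => ⟨0, fun t _ _ p hp q hq => ?_⟩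
      simp only [Nat.cast_zero, zero_div, Icc_self, image_singleton, mem_singleton_iff] at hp hq
      rw [hp, hq, dist_self]
      positivity
    | succ j ih =>
      intro hj
      have h1 := (ih (by omega)).add (Con_vol S (h j (by omega)))
      rw [add_zero] at h1
      refine tendsto_of_tendsto_of_tendsto_of_le_of_le tendsto_const_nhds h1
        (fun _ => zero_le) (fun t => ?_)
      refine le_trans (measure_mono ?_) (measure_union_le _ _)
      rw [← image_union, ← image_union, Icc_union_Icc_eq_Icc (by positivity)
        (by gcongr; linarith)]
      push_cast
      exact subset_rfl
  have h1 := key (n+1) le_rfl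
  have e : (((n+1:ℕ):ℝ)/(n+1)) = 1 := by push_cast; field_simp
  rw [e] at h1
  refine not_both S (A := circleProj '' Icc 0 1) (B := circleProj '' Icc 0 1) ?_ h1 h1
  rw [union_self]
  have := AddCircle.coe_image_Icc_eq (1:ℝ) 0
  rw [zero_add] at this
  exact this

lemma grid_le (n k : ℕ) (hk : k < n + 1) :
    (k:ℝ)/(n+1) ≤ ((k:ℝ)+1)/(n+1) ∧ ((k:ℝ)+1)/(n+1) ≤ (k:ℝ)/(n+1) + 1 := by
  constructor
  · gcongr; linarith
  · rw [add_div]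
    gcongr
    rw [div_le_one (by positivity)]
    linarith [(Nat.cast_nonneg n : (0:ℝ) ≤ n)]

lemma crack_of_grid {ω : Ω}
    (h : ∀ n k : ℕ, k < n + 1 → ω ∈ Con S (circleProj '' Icc ((k:ℝ)/(n+1)) (((k:ℝ)+1)/(n+1))) ∨
      ω ∈ Con S (circleProj '' Icc (((k:ℝ)+1)/(n+1)) ((k:ℝ)/(n+1)+1))) : ω ∈ S.Ωc := by
  have h1 : ∀ n : ℕ, ∃ k : ℕ, k < n + 1 ∧
      ω ∈ Con S (circleProj '' Icc (((k:ℝ)+1)/(n+1)) ((k:ℝ)/(n+1)+1)) := by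
    intro n
    by_contra hc
    push Not at hc
    exact vol_grid S n fun k hk => (h n k hk).resolve_right (hc k hk)
  choose k hk hC using h1
  obtain ⟨r, -, hr⟩ := (isCompact_univ (X := UnitAddCircle)).exists_mapClusterPt
    (f := (atTop : Filter ℕ)) (u := fun n => circleProj ((k n:ℝ)/(n+1))) (by simp)
  refine ⟨r, fun G hG hrG => ?_⟩
  obtain ⟨η, hη, hηG⟩ := Metric.isOpen_iff.1 hG.isOpen_compl r hrG
  have hf := mapClusterPt_iff_frequently.1 hr _ (Metric.ball_mem_nhds r (half_pos hη))
  have hlim := (tendsto_one_div_add_atTop_nhds_zero_nat (𝕜 := ℝ)).eventually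
    (gt_mem_nhds (half_pos hη))
  obtain ⟨n, hn1, hn2⟩ := (hf.and_eventually hlim).exists
  obtain ⟨g1, g2⟩ := grid_le n (k n) (hk n)
  have hun := arc_union g1 g2
  have hsub : G ⊆ circleProj '' Icc (((k n:ℝ)+1)/(n+1)) ((k n:ℝ)/(n+1)+1) := by
    intro p hp
    have hp' := hun.symm ▸ mem_univ p
    rcases hp' with hp' | hp'
    · exfalso
      have hd := arc_dist hp' (mem_image_of_mem circleProj ⟨le_rfl, g1⟩)
      have e : ((k n:ℝ)+1)/(n+1) - (k n:ℝ)/(n+1) = 1/((n:ℝ)+1) := by ring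
      rw [e] at hd
      have hd2 : dist (circleProj ((k n:ℝ)/(n+1))) r < η / 2 := hn1
      have : p ∈ Metric.ball r η := by
        have := dist_triangle p (circleProj ((k n:ℝ)/(n+1))) r
        rw [Metric.mem_ball]; linarith
      exact hηG this hp
    · exact hp'
  exact tendsto_of_tendsto_of_tendsto_of_le_of_le tendsto_const_nhds (Con_vol S (hC n))
    (fun _ => zero_le) (fun t => measure_mono (image_mono hsub))

lemma forward (hS : S.StablySynchronising) : S.P S.Ωc = 1 := by
  have := S.P_prob
  have h : ∀ᵐ ω ∂S.P, ω ∈ S.Ωc := by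
    have h1 : ∀ᵐ ω ∂S.P, ∀ n k : ℕ, k < n + 1 →
        ω ∈ Con S (circleProj '' Icc ((k:ℝ)/(n+1)) (((k:ℝ)+1)/(n+1))) ∨
        ω ∈ Con S (circleProj '' Icc (((k:ℝ)+1)/(n+1)) ((k:ℝ)/(n+1)+1)) := by
      rw [ae_all_iff]; intro n; rw [ae_all_iff]; intro k
      by_cases hk : k < n + 1
      · obtain ⟨g1, g2⟩ := grid_le n k hk
        filter_upwards [dichotomy S hS g1 g2] with ω hω _ using hω
      · exact Eventually.of_forall fun ω h => absurd h hk
    filter_upwards [h1] with ω hω using crack_of_grid S hω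
  have h2 : S.Ωc =ᵐ[S.P] univ := eventuallyEq_univ.2 h
  rw [measure_congr h2, measure_univ]

lemma forward2 (hS : S.StablySynchronising) (r : Ω → UnitAddCircle)
    (hr : ∀ ω ∈ S.Ωc, S.CrackPoint ω (r ω)) (x : UnitAddCircle) :
    S.P {ω | ω ∈ S.Ωc ∧ r ω = x} = 0 := by
  have := S.P_prob
  have h1 : S.P (⋃ n, Con S (cb x n))ᶜ = 0 :=
    (prob_compl_eq_zero_iff (stable_meas S x)).2 (stable_one S hS.2 x)
  refine measure_mono_null ?_ h1
  rintro ω ⟨hω, hx⟩ hU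
  obtain ⟨n, hn⟩ := mem_iUnion.1 hU
  have hpos : (0:ℝ) < 1 / ((n:ℝ) + 2) := by positivity
  have hc := hr ω hω (Metric.ball x (1 / ((n:ℝ) + 2)))ᶜ Metric.isOpen_ball.isClosed_compl
    (by rw [hx]; simp; positivity)
  refine not_both S ?_ (Con_vol S hn) hc
  rw [eq_univ_iff_forall]
  intro p
  by_cases hp : p ∈ Metric.ball x (1 / ((n:ℝ) + 2))
  · exact Or.inl (Metric.ball_subset_closedBall hp)
  · exact Or.inr hp

lemma backward_stable (r : Ω → UnitAddCircle) (hr : ∀ ω ∈ S.Ωc, S.CrackPoint ω (r ω))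
    (h1 : S.P S.Ωc = 1) (h2 : ∀ x : UnitAddCircle, S.P {ω | ω ∈ S.Ωc ∧ r ω = x} = 0) :
    S.EverywhereLocallyStable := by
  have := S.P_prob
  intro x
  refine le_antisymm prob_le_one ?_
  rw [← h1]
  refine meas_le_of (h2 x) ?_
  · intro ω hω
    by_cases hx : r ω = x
    · exact Or.inr ⟨hω, hx⟩
    · left
      have hd : 0 < dist (r ω) x := dist_pos.2 hx
      refine ⟨Metric.ball x (dist (r ω) x / 2), Metric.isOpen_ball,
        Metric.mem_ball_self (by linarith), ?_⟩
      have hc := hr ω hω (Metric.closedBall x (dist (r ω) x / 2)) Metric.isClosed_closedBall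
        (by rw [Metric.mem_closedBall]; linarith)
      exact tendsto_of_tendsto_of_tendsto_of_le_of_le tendsto_const_nhds hc
        (fun _ => zero_le) (fun t => measure_mono (image_mono Metric.ball_subset_closedBall))

lemma crack_sync {ω : Ω} {r x y : UnitAddCircle} (hr : S.CrackPoint ω r) (hx : r ≠ x)
    (hy : r ≠ y) :
    Tendsto (fun t => dist (S.φ t ω x) (S.φ t ω y)) S.tFilter (𝓝 0) := by
  obtain ⟨a, rfl⟩ := proj_surj x
  have hall := AddCircle.coe_image_Icc_eq (1:ℝ) a
  obtain ⟨b, ⟨hab, hb⟩, rfl⟩ : ∃ b ∈ Icc a (a+1), circleProj b = y := by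
    have : y ∈ ((↑) : ℝ → AddCircle (1:ℝ)) '' Icc a (a+1) := hall ▸ mem_univ y
    exact this
  have hper : circleProj (a + 1) = circleProj a := AddCircle.coe_add_period (1:ℝ) a
  have fin : ∀ c d : ℝ, c ≤ d → d ≤ c + 1 → r ∉ circleProj '' Icc c d →
      circleProj a ∈ circleProj '' Icc c d → circleProj b ∈ circleProj '' Icc c d →
      Tendsto (fun t => dist (S.φ t ω (circleProj a)) (S.φ t ω (circleProj b))) S.tFilter (𝓝 0) := by
    intro c d hcd hdc hrn ha hb
    have hC := vol_Con S hcd hdc (hr _ (arc_closed c d) hrn)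
    rw [Metric.tendsto_nhds]
    intro ε hε
    obtain ⟨k, hk⟩ := exists_nat_one_div_lt hε
    obtain ⟨N, hN⟩ := hC k
    refine (eventually_tFilter S).2 ⟨N, fun t ht hNt => ?_⟩
    rw [Real.dist_eq, sub_zero, abs_of_nonneg dist_nonneg]
    exact (hN t ht hNt _ ha _ hb).trans_lt hk
  by_cases h : r ∈ circleProj '' Icc a b
  · refine fin b (a+1) hb (by linarith) ?_ ⟨a+1, ⟨hb, le_rfl⟩, hper⟩ ⟨b, ⟨le_rfl, hb⟩, rfl⟩
    rintro ⟨d, ⟨hd1, hd2⟩, hd⟩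
    obtain ⟨c, ⟨hc1, hc2⟩, hc⟩ := h
    have hca : a < c := lt_of_le_of_ne hc1 (by rintro rfl; exact hx hc.symm)
    have hcb : c < b := lt_of_le_of_ne hc2 (by rintro rfl; exact hy hc.symm)
    have hda : d < a + 1 := lt_of_le_of_ne hd2 (by rintro rfl; exact hx (by rw [← hd, hper]))
    have heq : ((d:ℝ) : AddCircle (1:ℝ)) = (c : AddCircle (1:ℝ)) := hd.trans hc.symm
    rw [← sub_eq_zero, ← AddCircle.coe_sub, AddCircle.coe_eq_zero_iff] at heq
    obtain ⟨n, hn⟩ := heq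
    simp at hn
    have n0 : (0:ℝ) < n := by linarith
    have n1 : (n:ℝ) < 1 := by linarith
    have n0' : (0:ℤ) < n := by exact_mod_cast n0
    have n1' : n < 1 := by exact_mod_cast n1
    omega
  · exact fin a b hab hb h ⟨a, ⟨le_rfl, hab⟩, rfl⟩ ⟨b, ⟨hab, le_rfl⟩, rfl⟩

lemma backward_sync (r : Ω → UnitAddCircle) (hr : ∀ ω ∈ S.Ωc, S.CrackPoint ω (r ω))
    (h1 : S.P S.Ωc = 1) (h2 : ∀ x : UnitAddCircle, S.P {ω | ω ∈ S.Ωc ∧ r ω = x} = 0) :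
    S.Synchronising := by
  have := S.P_prob
  intro x y
  refine le_antisymm prob_le_one ?_
  rw [← h1]
  refine meas_le_of (measure_union_null (h2 x) (h2 y)) ?_
  · intro ω hω
    by_cases hx : r ω = x
    · exact Or.inr (Or.inl ⟨hω, hx⟩)
    by_cases hy : r ω = y
    · exact Or.inr (Or.inr ⟨hω, hy⟩)
    exact Or.inl (crack_sync S (hr ω hω) hx hy)

end

end SS

/-- `φ` is stably synchronising iff `ℙ(Ω_c) = 1` and the law of the crack point
is atomless. -/
theorem stablySynchronising_iff_crackPoints_ae_and_atomless
    {Ω : Type} [MeasurableSpace Ω] (S : RDS Ω)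
    (r : Ω → UnitAddCircle) (hr : ∀ ω ∈ S.Ωc, S.CrackPoint ω (r ω)) :
    S.StablySynchronising ↔
      (S.P S.Ωc = 1 ∧ ∀ x : UnitAddCircle, S.P {ω | ω ∈ S.Ωc ∧ r ω = x} = 0) := by
  constructor
  · intro h
    exact ⟨SS.forward S h, SS.forward2 S h r hr⟩
  · rintro ⟨h1, h2⟩
    exact ⟨SS.backward_sync S r hr h1 h2, SS.backward_stable S r hr h1 h2⟩
end
end

section
/- If the invertible RDS φ on 𝕊¹ is stably synchronising, then for ℙ-almost every ω∈Ω_c the crack point r̃(ω) is a repulsive crack point of ω, i.e. the equivalence relation x∼_ω y ⇔ d(φ(t,ω)x,φ(t,ω)y)→0 as t→∞ has exactly the two equivalence classes {r̃(ω)} and 𝕊¹∖{r̃(ω)}. -/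
open MeasureTheory Filter Topology Set ENNReal

noncomputable section

namespace CrackAux

open MeasureTheory Filter Topology Set ENNReal

lemma preconn (y : UnitAddCircle) (ε : ℝ) : IsPreconnected {p : UnitAddCircle | ε ≤ dist p y} := by
  have key : {p : UnitAddCircle | ε ≤ dist p y} =
      (fun s : ℝ => y + (s : UnitAddCircle)) '' Icc ε (1 - ε) ∪
      {p : UnitAddCircle | ε ≤ 0} := by
    ext p
    simp only [mem_setOf_eq, mem_union, mem_image, mem_Icc, dist_eq_norm]
    constructor
    · intro hp
      obtain ⟨s, hs⟩ := QuotientAddGroup.mk_surjective (p - y)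
      have hs' : ((Int.fract s : ℝ) : UnitAddCircle) = p - y := by
        rw [← hs]
        rw [Int.fract]
        have : ((⌊s⌋ : ℝ) : UnitAddCircle) = 0 := by
          rw [AddCircle.coe_eq_zero_iff]
          exact ⟨⌊s⌋, by simp⟩
        rw [AddCircle.coe_sub, this, sub_zero]
      left
      refine ⟨Int.fract s, ⟨?_, ?_⟩, by rw [hs']; abel⟩
      · rw [← hs', UnitAddCircle.norm_eq] at hp
        have := round_le (Int.fract s) 0
        simp only [Int.cast_zero, sub_zero, abs_of_nonneg (Int.fract_nonneg s)] at this
        linarith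
      · rw [← hs', UnitAddCircle.norm_eq] at hp
        have := round_le (Int.fract s) 1
        rw [Int.cast_one, abs_sub_comm (Int.fract s) 1,
          abs_of_nonneg (by linarith [Int.fract_lt_one s] : (0:ℝ) ≤ 1 - Int.fract s)] at this
        linarith
    · rintro (⟨s, ⟨h1, h2⟩, rfl⟩ | h)
      · rw [add_sub_cancel_left, UnitAddCircle.norm_eq]
        rcases le_or_gt (round s) 0 with h | h
        · have : ((round s : ℤ) : ℝ) ≤ 0 := by exact_mod_cast h
          have := le_abs_self (s - round s)
          linarith
        · have : (1 : ℝ) ≤ ((round s : ℤ) : ℝ) := by exact_mod_cast h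
          have := neg_abs_le (s - round s)
          linarith
      · exact h.trans (norm_nonneg _)
  rw [key]
  by_cases h : ε ≤ 0
  · simp only [h, setOf_true, union_univ]
    exact isPreconnected_univ
  · simp only [h, setOf_false, union_empty]
    apply isPreconnected_Icc.image
    apply Continuous.continuousOn
    exact continuous_const.add (AddCircle.continuous_mk' 1)

lemma vol_ge {C : Set UnitAddCircle} (hC : IsPreconnected C) (hcl : IsClosed C)
    {a b : UnitAddCircle} (ha : a ∈ C) (hb : b ∈ C) :
    ENNReal.ofReal (dist a b) ≤ 2 * volume C := by
  set d := dist a b with hd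
  have hd2 : d ≤ 1/2 := by
    rw [hd, dist_eq_norm]
    simpa using AddCircle.norm_le_half_period (p := (1:ℝ)) (by norm_num) (x := a - b)
  have hsub : Icc 0 d ⊆ (fun z => dist a z) '' C := by
    have h1 : IsPreconnected ((fun z => dist a z) '' C) :=
      hC.image _ (by fun_prop)
    have := h1.Icc_subset (mem_image_of_mem _ ha) (mem_image_of_mem _ hb)
    simpa using this
  -- two parametrisations
  have gen : ∀ (f : ℝ → UnitAddCircle), MeasurePreserving f (volume.restrict (Ioc 0 1)) volume →
      volume (Ioc 0 d ∩ f ⁻¹' C) ≤ volume C := by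
    intro f hf
    rw [← hf.measure_preimage hcl.measurableSet.nullMeasurableSet]
    rw [Measure.restrict_apply (hf.measurable hcl.measurableSet)]
    apply measure_mono
    rintro s ⟨⟨h1, h2⟩, h3⟩
    exact ⟨h3, h1, by linarith⟩
  have hp0 : MeasurePreserving (fun s : ℝ => (s : UnitAddCircle))
      (volume.restrict (Ioc 0 1)) volume := by
    simpa using UnitAddCircle.measurePreserving_mk 0
  have hplus := gen (fun s => a + (s : UnitAddCircle)) ((measurePreserving_add_left volume a).comp hp0)
  have hminus := gen (fun s => a - (s : UnitAddCircle))
    ((Measure.measurePreserving_sub_left volume a).comp hp0)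
  have hcov : Ioc 0 d ⊆ (Ioc 0 d ∩ (fun s : ℝ => a + (s : UnitAddCircle)) ⁻¹' C) ∪
      (Ioc 0 d ∩ (fun s : ℝ => a - (s : UnitAddCircle)) ⁻¹' C) := by
    intro s hs
    obtain ⟨z, hz, hzs⟩ := hsub ⟨hs.1.le, hs.2⟩
    obtain ⟨u, hu⟩ := QuotientAddGroup.mk_surjective (z - a)
    have hu1 : (u : UnitAddCircle) = z - a := hu
    have hn : |u - round u| = s := by
      rw [← UnitAddCircle.norm_eq, hu1, ← hzs]; simp only [dist_eq_norm]; rw [norm_sub_rev]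
    have hr : ((round u : ℝ) : UnitAddCircle) = 0 := by
      rw [AddCircle.coe_eq_zero_iff]
      exact ⟨round u, by simp⟩
    have hu2 : ((u - round u : ℝ) : UnitAddCircle) = z - a := by
      rw [AddCircle.coe_sub, hr, sub_zero, hu1]
    rcases abs_cases (u - round u) with ⟨h, _⟩ | ⟨h, _⟩
    · left
      refine ⟨hs, ?_⟩
      simp only [mem_preimage]
      rw [← hn, h, hu2]; simpa using hz
    · right
      refine ⟨hs, ?_⟩
      simp only [mem_preimage]
      rw [← hn, h, AddCircle.coe_neg, hu2]; simpa using hz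
  calc ENNReal.ofReal d = volume (Ioc 0 d) := by simp
    _ ≤ _ := measure_mono hcov
    _ ≤ _ := measure_union_le _ _
    _ ≤ volume C + volume C := add_le_add hplus hminus
    _ = 2 * volume C := (two_mul _).symm

variable {Ω : Type} [m : MeasurableSpace Ω] (S : RDS Ω)

lemma nat_mem (n : ℕ) : (n : ℝ) ∈ S.T := by
  rcases S.T_cases with h | h <;> rw [h]
  · exact ⟨n, rfl⟩
  · exact (Nat.cast_nonneg n : (0 : ℝ) ≤ n)

lemma tendsto_nat : Tendsto (fun n : ℕ => (n : ℝ)) atTop S.tFilter := by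
  refine tendsto_inf.2 ⟨tendsto_natCast_atTop_atTop (R := ℝ), tendsto_principal.2 ?_⟩
  exact Eventually.of_forall (nat_mem S)

def CrackN (ω : Ω) (r : UnitAddCircle) : Prop :=
  ∀ G : Set UnitAddCircle, IsClosed G → r ∉ G →
    Tendsto (fun n : ℕ => volume (⇑(S.φ n ω) '' G)) atTop (𝓝 0)

lemma crackN_of {ω : Ω} {r : UnitAddCircle} (h : S.CrackPoint ω r) : CrackN S ω r :=
  fun G hG hr => (h G hG hr).comp (tendsto_nat S)

lemma crackN_shift {ω : Ω} {r : UnitAddCircle} (h : CrackN S ω r) (s : ℕ) :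
    CrackN S (S.θ s ω) (S.φ s ω r) := by
  intro G hG hr
  have h1 := h (⇑(S.φ s ω) ⁻¹' G) (hG.preimage (S.φ s ω).continuous) hr
  have h2 := h1.comp (tendsto_add_atTop_nat s)
  refine h2.congr fun n => ?_
  simp only [Function.comp]
  congr 1
  have hc : ∀ x, S.φ ((n + s : ℕ) : ℝ) ω x = S.φ n (S.θ s ω) (S.φ s ω x) := by
    intro x
    rw [Nat.cast_add, add_comm]
    exact S.φ_cocycle s (nat_mem S s) n (nat_mem S n) ω x
  ext z
  constructor
  · rintro ⟨x, hx, rfl⟩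
    exact ⟨_, hx, (hc x).symm⟩
  · rintro ⟨w, hw, rfl⟩
    refine ⟨(S.φ s ω).symm w, by simpa using hw, ?_⟩
    refine (hc _).trans ?_
    simp

abbrev D : ℕ → UnitAddCircle := TopologicalSpace.denseSeq UnitAddCircle

/-- complement of `V` contracts (along a dense sequence, integer times) -/
def A (V : Set UnitAddCircle) : Set Ω :=
  {ω | ∀ k : ℕ, ∃ N : ℕ, ∀ n ≥ N, ∀ i j : ℕ, D i ∉ V → D j ∉ V →
    dist (S.φ n ω (D i)) (S.φ n ω (D j)) ≤ 1 / ((k : ℝ) + 1)}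

lemma A_mono {V W : Set UnitAddCircle} (h : V ⊆ W) : A S V ⊆ A S W := by
  intro ω hω k
  obtain ⟨N, hN⟩ := hω k
  exact ⟨N, fun n hn i j hi hj => hN n hn i j (fun q => hi (h q)) (fun q => hj (h q))⟩

lemma meas_pt (n : ℕ) (p : UnitAddCircle) : Measurable[S.F n] (fun ω => S.φ n ω p) := by
  have := S.φ_meas n (nat_mem S n)
  exact this.comp (@measurable_prodMk_right Ω UnitAddCircle (S.F n) _ p)

lemma F_le_sup (n : ℕ) : S.F n ≤ ⨆ s ∈ S.T, S.F s :=
  le_iSup₂_of_le (n : ℝ) (nat_mem S n) le_rfl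

lemma meas_dist {Ω : Type} (m' : MeasurableSpace Ω) {f g : Ω → UnitAddCircle} (hf : Measurable f)
    (hg : Measurable g) {c : ℝ} : MeasurableSet {ω | dist (f ω) (g ω) ≤ c} :=
  measurableSet_le (hf.dist hg) measurable_const

lemma A_meas (V : Set UnitAddCircle) : MeasurableSet[⨆ s ∈ S.T, S.F s] (A S V) := by
  have : A S V = ⋂ k : ℕ, ⋃ N : ℕ, ⋂ n : ℕ, ⋂ (_ : n ≥ N), ⋂ i : ℕ, ⋂ j : ℕ,
      ⋂ (_ : D i ∉ V), ⋂ (_ : D j ∉ V),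
      {ω | dist (S.φ n ω (D i)) (S.φ n ω (D j)) ≤ 1 / ((k : ℝ) + 1)} := by
    ext ω; simp [A]
  rw [this]
  refine MeasurableSet.iInter fun k => MeasurableSet.iUnion fun N => MeasurableSet.iInter fun n =>
    MeasurableSet.iInter fun _ => MeasurableSet.iInter fun i => MeasurableSet.iInter fun j =>
    MeasurableSet.iInter fun _ => MeasurableSet.iInter fun _ => ?_
  apply F_le_sup S n
  exact meas_dist (S.F n) (meas_pt S n _) (meas_pt S n _)

lemma sup_le : (⨆ s ∈ S.T, S.F s) ≤ m := iSup₂_le S.F_le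

lemma dist_le_of_crack {ω : Ω} {y : UnitAddCircle} {δ : ℝ} (t : ℝ)
    {a b : UnitAddCircle} (ha : δ ≤ dist a y) (hb : δ ≤ dist b y) :
    ENNReal.ofReal (dist (S.φ t ω a) (S.φ t ω b)) ≤
      2 * volume (⇑(S.φ t ω) '' {p | δ ≤ dist p y}) := by
  apply vol_ge
  · exact (preconn y δ).image _ (S.φ t ω).continuous.continuousOn
  · exact (S.φ t ω).isClosedMap _ (isClosed_le continuous_const (by fun_prop))
  · exact mem_image_of_mem _ ha
  · exact mem_image_of_mem _ hb

lemma mem_A_of_crack {ω : Ω} {r y : UnitAddCircle} {δ : ℝ} (h : CrackN S ω r)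
    (hr : r ∈ Metric.ball y δ) : ω ∈ A S (Metric.ball y δ) := by
  intro k
  have h1 := h {p | δ ≤ dist p y} (isClosed_le continuous_const (by fun_prop))
    (by simpa using hr)
  have h2 : Tendsto (fun n : ℕ => 2 * volume (⇑(S.φ n ω) '' {p | δ ≤ dist p y})) atTop (𝓝 0) := by
    simpa using ENNReal.Tendsto.const_mul h1 (Or.inr (by simp : (2:ℝ≥0∞) ≠ ⊤))
  have hpos : (0 : ℝ) < 1 / ((k : ℝ) + 1) := by positivity
  have h3 := h2.eventually (gt_mem_nhds (ENNReal.ofReal_pos.2 hpos))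
  obtain ⟨N, hN⟩ := eventually_atTop.1 h3
  refine ⟨N, fun n hn i j hi hj => ?_⟩
  have hh := (dist_le_of_crack S (ω := ω) (y := y) (δ := δ) n (a := D i) (b := D j)
    (by simpa using hi) (by simpa using hj)).trans_lt (hN n hn)
  exact ((ENNReal.ofReal_lt_ofReal_iff hpos).1 hh).le

lemma closure_close {X : Type} [PseudoMetricSpace X] {f : X → X} (hf : Continuous f)
    (W : Set X) {c : ℝ} (h : ∀ a ∈ W, ∀ b ∈ W, dist (f a) (f b) ≤ c)
    {a b : X} (ha : a ∈ closure W) (hb : b ∈ closure W) :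
    dist (f a) (f b) ≤ c := by
  have hab : (a, b) ∈ closure (W ×ˢ W) := by
    rw [closure_prod_eq]; exact ⟨ha, hb⟩
  have hcls : IsClosed {q : X × X | dist (f q.1) (f q.2) ≤ c} :=
    isClosed_le (by fun_prop) continuous_const
  have hsub : W ×ˢ W ⊆ {q : X × X | dist (f q.1) (f q.2) ≤ c} :=
    fun q hq => h _ hq.1 _ hq.2
  exact closure_minimal hsub hcls hab

lemma crack_not_stable {ω : Ω} {y : UnitAddCircle}
    (h : ∀ k : ℕ, ω ∈ A S (Metric.ball y (1 / ((k : ℝ) + 1))))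
    {U : Set UnitAddCircle} (hU : IsOpen U) (hy : y ∈ U)
    (ht : Tendsto (fun t => volume (⇑(S.φ t ω) '' U)) S.tFilter (𝓝 0)) : False := by
  obtain ⟨ε, hε, hεU⟩ := Metric.isOpen_iff.1 hU y hy
  obtain ⟨k, hk⟩ := exists_nat_one_div_lt hε
  obtain ⟨N, hN⟩ := h k 7
  have ht' := (ht.comp (tendsto_nat S)).eventually
    (gt_mem_nhds (by norm_num : (0 : ℝ≥0∞) < 1/2))
  obtain ⟨n, hn1, hn2⟩ := (ht'.and (eventually_ge_atTop N)).exists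
  have hN := hN n hn2
  set f := S.φ n ω
  set W : Set UnitAddCircle := {p | 1 / ((k : ℝ) + 1) < dist p y} with hW
  have hWo : IsOpen W := isOpen_lt continuous_const (by fun_prop)
  have hcl : W ⊆ closure (W ∩ range D) :=
    (TopologicalSpace.denseRange_denseSeq UnitAddCircle).open_subset_closure_inter hWo
  have hclose : ∀ a ∈ W, ∀ b ∈ W, dist (f a) (f b) ≤ 1/8 := by
    intro a ha b hb
    refine closure_close f.continuous (W ∩ range D) ?_ (hcl ha) (hcl hb)
    rintro _ ⟨h1, i, rfl⟩ _ ⟨h2, j, rfl⟩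
    have h1' : 1 / ((k : ℝ) + 1) < dist (D i) y := h1
    have h2' : 1 / ((k : ℝ) + 1) < dist (D j) y := h2
    have := hN i j (fun hh => lt_asymm h1' (Metric.mem_ball.1 hh))
      (fun hh => lt_asymm h2' (Metric.mem_ball.1 hh))
    refine this.trans (le_of_eq (by norm_num))
  have hWv : volume (⇑f '' W) ≤ 1/4 := by
    rcases W.eq_empty_or_nonempty with he | ⟨a, ha⟩
    · rw [he]; simp
    · have : ⇑f '' W ⊆ Metric.closedBall (f a) (1/8) := by
        rintro _ ⟨b, hb, rfl⟩
        exact hclose b hb a ha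
      refine (measure_mono this).trans ?_
      rw [AddCircle.volume_closedBall]
      rw [show min (1:ℝ) (2 * (1/8)) = 1/4 by norm_num]
      rw [ENNReal.ofReal_div_of_pos (by norm_num)]
      simp
  have huniv : (univ : Set UnitAddCircle) ⊆ ⇑f '' U ∪ ⇑f '' W := by
    intro z _
    rw [← image_union]
    refine ⟨f.symm z, ?_, by simp⟩
    rcases lt_or_ge (dist (f.symm z) y) ε with h | h
    · exact Or.inl (hεU h)
    · exact Or.inr (lt_of_lt_of_le hk h)
  have h1 : (1 : ℝ≥0∞) ≤ volume (⇑f '' U) + volume (⇑f '' W) := by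
    calc (1 : ℝ≥0∞) = volume (univ : Set UnitAddCircle) := by simp
      _ ≤ _ := measure_mono huniv
      _ ≤ _ := measure_union_le _ _
  have h2 : volume (⇑f '' U) + volume (⇑f '' W) < 1/2 + 1/2 := by
    apply ENNReal.add_lt_add hn1
    refine hWv.trans_lt ?_
    rw [one_div, one_div]
    exact ENNReal.inv_lt_inv.2 (by norm_num)
  rw [ENNReal.add_halves] at h2
  exact absurd h1 (not_le.2 h2)

lemma small_A (h : S.EverywhereLocallyStable) (y : UnitAddCircle) {c : ℝ≥0∞} (hc : 0 < c) :
    ∃ δ > 0, S.P (A S (Metric.ball y δ)) < c := by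
  have := S.P_prob
  have hmeas : ∀ V, MeasurableSet (A S V) := fun V => sup_le S _ (A_meas S V)
  have hz : S.P (⋂ k : ℕ, A S (Metric.ball y (1 / ((k : ℝ) + 1)))) = 0 := by
    have hm : MeasurableSet (⋂ k : ℕ, A S (Metric.ball y (1 / ((k : ℝ) + 1)))) :=
      MeasurableSet.iInter fun k => hmeas _
    rw [← compl_compl (⋂ k : ℕ, A S (Metric.ball y (1 / ((k : ℝ) + 1)))),
      prob_compl_eq_zero_iff hm.compl]
    refine le_antisymm prob_le_one ?_
    rw [← h y]
    apply measure_mono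
    rintro ω ⟨U, hU, hy, ht⟩ hω
    exact crack_not_stable S (mem_iInter.1 hω) hU hy ht
  have ht := tendsto_measure_iInter_atTop (μ := S.P)
    (s := fun k : ℕ => A S (Metric.ball y (1 / ((k : ℝ) + 1))))
    (fun k => (hmeas _).nullMeasurableSet)
    (fun i j hij => A_mono S (Metric.ball_subset_ball (Nat.one_div_le_one_div hij)))
    ⟨0, measure_ne_top _ _⟩
  rw [hz] at ht
  obtain ⟨k, hk⟩ := (ht.eventually (gt_mem_nhds hc)).exists
  exact ⟨_, Nat.one_div_pos_of_nat, hk⟩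

lemma unif_small (h : S.EverywhereLocallyStable) {c : ℝ≥0∞} (hc : 0 < c) :
    ∃ ε > 0, ∀ x, S.P (A S (Metric.ball x ε)) ≤ c := by
  choose δ hδ hδc using fun y => small_A S h y hc
  obtain ⟨ε, hε, H⟩ := lebesgue_number_lemma_of_metric (s := (univ : Set UnitAddCircle))
    (c := fun y => Metric.ball y (δ y)) isCompact_univ (fun _ => Metric.isOpen_ball)
    (fun y _ => mem_iUnion.2 ⟨y, Metric.mem_ball_self (hδ y)⟩)
  refine ⟨ε, hε, fun x => ?_⟩
  obtain ⟨y, hy⟩ := H x (mem_univ _)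
  exact (measure_mono (A_mono S hy)).trans (hδc y).le

lemma null_set (h : S.EverywhereLocallyStable) (x : UnitAddCircle) :
    S.P {ω | ∃ r, CrackN S ω r ∧
      Tendsto (fun n : ℕ => dist (S.φ n ω x) (S.φ n ω r)) atTop (𝓝 0)} = 0 := by
  have := S.P_prob
  refine le_antisymm (le_of_forall_gt fun c hc => ?_) zero_le
  obtain ⟨c', hc', hcc⟩ := exists_between hc
  refine lt_of_le_of_lt ?_ hcc
  obtain ⟨ε, hε, H⟩ := unif_small S h hc'
  set B : ℕ → Set UnitAddCircle := fun i => Metric.ball (D i) (ε/2) with hB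
  have hBU : ⋃ i, disjointed B i = univ := by
    rw [iUnion_disjointed, eq_univ_iff_forall]
    intro z
    obtain ⟨i, hi⟩ := (TopologicalSpace.denseRange_denseSeq UnitAddCircle).exists_dist_lt z
      (half_pos hε)
    exact mem_iUnion.2 ⟨i, hi⟩
  have hBm : ∀ i, MeasurableSet (disjointed B i) :=
    MeasurableSet.disjointed fun i => Metric.isOpen_ball.measurableSet
  let E : ℕ → ℕ → Set Ω := fun n i => (fun ω => S.φ n ω x) ⁻¹' disjointed B i
  have hEm : ∀ n i : ℕ, MeasurableSet[S.F (n : ℝ)] (E n i) := fun n i => meas_pt S n x (hBm i)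
  let Q : ℕ → Set Ω := fun n => ⋃ i, E n i ∩ S.θ n ⁻¹' A S (Metric.ball (D i) ε)
  have hQ : ∀ n, S.P (Q n) ≤ c' := by
    intro n
    calc S.P (Q n) ≤ ∑' i, S.P (E n i ∩ S.θ n ⁻¹' A S (Metric.ball (D i) ε)) :=
          measure_iUnion_le _
      _ = ∑' i, S.P (E n i) * S.P (A S (Metric.ball (D i) ε)) := by
          congr 1; ext i
          exact S.θ_indep n (nat_mem S n) _ _ (hEm n i) (A_meas S _)
      _ ≤ ∑' i, S.P (E n i) * c' := ENNReal.tsum_le_tsum fun i => by gcongr; exact H _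
      _ = (∑' i, S.P (E n i)) * c' := ENNReal.tsum_mul_right
      _ = S.P (⋃ i, E n i) * c' := by
          rw [measure_iUnion]
          · intro i j hij
            exact (disjoint_disjointed B hij).preimage _
          · intro i
            exact S.F_le n (nat_mem S n) _ (hEm n i)
      _ ≤ 1 * c' := by gcongr; exact prob_le_one
      _ = c' := one_mul _
  have hsub : {ω | ∃ r, CrackN S ω r ∧
      Tendsto (fun n : ℕ => dist (S.φ n ω x) (S.φ n ω r)) atTop (𝓝 0)} ⊆
      ⋃ N : ℕ, ⋂ n : ℕ, ⋂ (_ : n ≥ N), Q n := by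
    rintro ω ⟨r, hr, ht⟩
    obtain ⟨N, hN⟩ := eventually_atTop.1 (ht.eventually (gt_mem_nhds (half_pos hε)))
    simp only [mem_iUnion, mem_iInter]
    refine ⟨N, fun n hn => ?_⟩
    have hz : S.φ n ω x ∈ ⋃ i, disjointed B i := by rw [hBU]; trivial
    obtain ⟨i, hi⟩ := mem_iUnion.1 hz
    refine mem_iUnion.2 ⟨i, hi, ?_⟩
    apply mem_A_of_crack S (crackN_shift S hr n)
    have h1 : dist (S.φ n ω x) (D i) < ε / 2 := disjointed_subset B i hi
    have h2 := hN n hn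
    rw [Metric.mem_ball]
    have := dist_triangle_left (S.φ n ω r) (D i) (S.φ n ω x)
    linarith
  refine (measure_mono hsub).trans ?_
  rw [Monotone.measure_iUnion]
  · refine iSup_le fun N => ?_
    exact (measure_mono (iInter₂_subset N le_rfl)).trans (hQ N)
  · intro a b hab
    refine iInter_mono fun n => ?_
    exact iInter_mono' fun hn => ⟨hab.trans hn, le_rfl⟩

lemma part_two {ω : Ω} {r : UnitAddCircle} (h : S.CrackPoint ω r) {x y : UnitAddCircle}
    (hx : x ≠ r) (hy : y ≠ r) :
    Tendsto (fun t => dist (S.φ t ω x) (S.φ t ω y)) S.tFilter (𝓝 0) := by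
  set δ := min (dist x r) (dist y r)
  have hδ : 0 < δ := lt_min (dist_pos.2 hx) (dist_pos.2 hy)
  have h1 := h {p | δ ≤ dist p r} (isClosed_le continuous_const (by fun_prop)) (by simpa using hδ)
  have h2 : Tendsto (fun t => 2 * volume (⇑(S.φ t ω) '' {p | δ ≤ dist p r})) S.tFilter (𝓝 0) := by
    simpa using ENNReal.Tendsto.const_mul h1 (Or.inr (by simp : (2:ℝ≥0∞) ≠ ⊤))
  have h3 : Tendsto (fun t => ENNReal.ofReal (dist (S.φ t ω x) (S.φ t ω y))) S.tFilter (𝓝 0) :=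
    tendsto_of_tendsto_of_tendsto_of_le_of_le tendsto_const_nhds h2 (fun _ => zero_le)
      (fun t => dist_le_of_crack S t (min_le_left _ _) (min_le_right _ _))
  have h4 := (ENNReal.tendsto_toReal (by simp : (0:ℝ≥0∞) ≠ ⊤)).comp h3
  simpa [Function.comp_def, ENNReal.toReal_ofReal dist_nonneg] using h4

end CrackAux

/-- if `φ` is stably synchronising then almost every contractive `ω` has a
repulsive crack point: the equivalence classes of `∼_ω` are exactly `{r̃(ω)}` and its
complement. -/
theorem stablySynchronising_crackPoint_repulsive
    {Ω : Type} [MeasurableSpace Ω] (S : RDS Ω) (h : S.StablySynchronising)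
    (r : Ω → UnitAddCircle) (hr : ∀ ω ∈ S.Ωc, S.CrackPoint ω (r ω)) :
    ∀ᵐ ω ∂S.P, ω ∈ S.Ωc →
      ((∀ x : UnitAddCircle, x ≠ r ω →
        ¬ Tendsto (fun t => dist (S.φ t ω x) (S.φ t ω (r ω))) S.tFilter (𝓝 0)) ∧
       (∀ x y : UnitAddCircle, x ≠ r ω → y ≠ r ω →
        Tendsto (fun t => dist (S.φ t ω x) (S.φ t ω y)) S.tFilter (𝓝 0))) := by
  have n0 := measure_eq_zero_iff_ae_notMem.1 (CrackAux.null_set S h.2 0)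
  have n1 := measure_eq_zero_iff_ae_notMem.1 (CrackAux.null_set S h.2 ((1/2 : ℝ) : UnitAddCircle))
  filter_upwards [n0, n1] with ω h0 h1 hω
  have hc := hr ω hω
  refine ⟨fun x hx ht => ?_, fun x y hx hy => CrackAux.part_two S hc hx hy⟩
  have key : ∀ z, z ≠ r ω → Tendsto (fun n : ℕ => dist (S.φ n ω z) (S.φ n ω (r ω))) atTop (𝓝 0) := by
    intro z hz
    have h2 := (CrackAux.part_two S hc hz hx).add ht
    rw [add_zero] at h2
    have h3 := squeeze_zero (fun t => dist_nonneg)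
      (fun t => dist_triangle (S.φ t ω z) (S.φ t ω x) (S.φ t ω (r ω))) h2
    exact h3.comp (CrackAux.tendsto_nat S)
  by_cases h00 : (0 : UnitAddCircle) = r ω
  · apply h1
    refine ⟨r ω, CrackAux.crackN_of S hc, key _ ?_⟩
    rw [← h00]
    intro hh
    have := congrArg norm hh
    rw [UnitAddCircle.norm_eq, norm_zero] at this
    norm_num at this
  · exact h0 ⟨r ω, CrackAux.crackN_of S hc, key _ h00⟩
end
end

section
/- Let φ be an invertible RDS on 𝕊¹ and let q:Ω→𝕊¹ be an 𝓕₊-measurable function such that for each t∈𝕋⁺, φ(t,ω)q(ω)=q(θ^tω) for ℙ-almost all ω∈Ω. Then the pushforward measure q_*ℙ is an ergodic measure for the transition family (φ̄ₓᵗ) given by φ̄ₓᵗ(A)=ℙ(ω : φ(t,ω)⁻¹(x)∈A), and q_*ℙ is either atomless or a Dirac mass at a deterministic fixed point of φ. -/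
open MeasureTheory Filter Topology Set ENNReal

noncomputable section

open ProbabilityTheory

section Generic

variable {Ω α β : Type} [mΩ : MeasurableSpace Ω] [MeasurableSpace α] [MeasurableSpace β]

lemma aux_prod (P : Measure Ω) [IsProbabilityMeasure P] (f : Ω → α) (g : Ω → β)
    (hf : Measurable f) (hg : Measurable g)
    (h : ∀ E B, MeasurableSet E → MeasurableSet B →
      P (f ⁻¹' E ∩ g ⁻¹' B) = P (f ⁻¹' E) * P (g ⁻¹' B)) :
    P.map (fun ω => (f ω, g ω)) = (P.map f).prod (P.map g) := by
  rw [← indepFun_iff_map_prod_eq_prod_map_map hf.aemeasurable hg.aemeasurable,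
    indepFun_iff_measure_inter_preimage_eq_mul]
  exact h

lemma aux_right (P : Measure Ω) [IsProbabilityMeasure P] (f : Ω → α) (g : Ω → β)
    (hf : Measurable f) (hg : Measurable g)
    (h : ∀ E B, MeasurableSet E → MeasurableSet B →
      P (f ⁻¹' E ∩ g ⁻¹' B) = P (f ⁻¹' E) * P (g ⁻¹' B))
    (C : Set (α × β)) (hC : MeasurableSet C) :
    P {ω | (f ω, g ω) ∈ C} = ∫⁻ y, P {ω | (f ω, y) ∈ C} ∂(P.map g) := by
  have : P {ω | (f ω, g ω) ∈ C} = (P.map (fun ω => (f ω, g ω))) C := by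
    rw [Measure.map_apply (hf.prodMk hg) hC]; rfl
  rw [this, aux_prod P f g hf hg h]
  have := Measure.isProbabilityMeasure_map (μ := P) hf.aemeasurable
  have := Measure.isProbabilityMeasure_map (μ := P) hg.aemeasurable
  rw [Measure.prod_apply_symm hC]
  refine lintegral_congr fun y => ?_
  rw [Measure.map_apply hf (measurable_prodMk_right hC)]; rfl

lemma aux_left (P : Measure Ω) [IsProbabilityMeasure P] (f : Ω → α) (g : Ω → β)
    (hf : Measurable f) (hg : Measurable g)
    (h : ∀ E B, MeasurableSet E → MeasurableSet B →
      P (f ⁻¹' E ∩ g ⁻¹' B) = P (f ⁻¹' E) * P (g ⁻¹' B))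
    (C : Set (α × β)) (hC : MeasurableSet C) :
    P {ω | (f ω, g ω) ∈ C} = ∫⁻ ω, (P.map g) {y | (f ω, y) ∈ C} ∂P := by
  have : P {ω | (f ω, g ω) ∈ C} = (P.map (fun ω => (f ω, g ω))) C := by
    rw [Measure.map_apply (hf.prodMk hg) hC]; rfl
  rw [this, aux_prod P f g hf hg h]
  have := Measure.isProbabilityMeasure_map (μ := P) hf.aemeasurable
  have := Measure.isProbabilityMeasure_map (μ := P) hg.aemeasurable
  rw [Measure.prod_apply hC, lintegral_map (measurable_measure_prodMk_left hC) hf]; rfl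

/-- the inverse of a measurable family of homeomorphisms is measurable -/
lemma aux_symm (φ : α → UnitAddCircle ≃ₜ UnitAddCircle)
    (hφ : Measurable (fun p : α × UnitAddCircle => φ p.1 p.2)) :
    Measurable (fun p : α × UnitAddCircle => (φ p.1).symm p.2) := by
  refine measurable_of_isClosed fun K hK => ?_
  obtain ⟨D, hDK, hDc, hD⟩ :=
    (TopologicalSpace.IsSeparable.of_separableSpace K).exists_countable_dense_subset
  have hset : (fun p : α × UnitAddCircle => (φ p.1).symm p.2) ⁻¹' K =
      ⋂ n : ℕ, ⋃ d ∈ D, {p : α × UnitAddCircle | dist p.2 (φ p.1 d) < 1 / ((n : ℝ) + 1)} := by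
    ext ⟨a, x⟩
    simp only [mem_preimage, mem_iInter, mem_iUnion, mem_ofPred_eq, exists_prop]
    have hcl : closure D = K := subset_antisymm (closure_minimal hDK hK) hD
    have h1 : (φ a).symm x ∈ K ↔ x ∈ closure (φ a '' D) := by
      rw [← (φ a).image_closure, hcl]
      constructor
      · intro h; exact ⟨_, h, by simp⟩
      · rintro ⟨y, hy, rfl⟩; simpa using hy
    rw [h1, Metric.mem_closure_iff]
    constructor
    · intro h n
      obtain ⟨_, ⟨d, hd, rfl⟩, hlt⟩ := h (1 / ((n : ℝ) + 1)) (by positivity)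
      exact ⟨d, hd, hlt⟩
    · intro h ε hε
      obtain ⟨n, hn⟩ := exists_nat_one_div_lt hε
      obtain ⟨d, hd, hlt⟩ := h n
      exact ⟨_, ⟨d, hd, rfl⟩, hlt.trans hn⟩
  rw [hset]
  refine MeasurableSet.iInter fun n => MeasurableSet.biUnion hDc fun d _ => ?_
  refine measurableSet_lt (Measurable.dist measurable_snd ?_) measurable_const
  exact hφ.comp (measurable_fst.prodMk measurable_const)

lemma aux_C1 (φ : α → UnitAddCircle ≃ₜ UnitAddCircle)
    (hφ : Measurable (fun p : α × UnitAddCircle => φ p.1 p.2))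
    (A B : Set UnitAddCircle) (hA : MeasurableSet A) (hB : MeasurableSet B) :
    MeasurableSet {p : α × UnitAddCircle | (φ p.1).symm p.2 ∈ A ∧ p.2 ∈ B} :=
  MeasurableSet.inter (aux_symm φ hφ hA) (measurable_snd hB)

lemma aux_C2 (φ : α → UnitAddCircle ≃ₜ UnitAddCircle)
    (hφ : Measurable (fun p : α × UnitAddCircle => φ p.1 p.2))
    (G : Set α) (hG : MeasurableSet G) (p : UnitAddCircle) :
    MeasurableSet {z : α × UnitAddCircle | z.1 ∈ G ∧ z.2 = φ z.1 p} := by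
  refine MeasurableSet.inter (measurable_fst hG) (measurableSet_eq_fun measurable_snd ?_)
  exact hφ.comp (measurable_fst.prodMk measurable_const)

end Generic

namespace RDS

variable {Ω : Type} [m : MeasurableSpace Ω] (S : RDS Ω)

lemma Fplus_le : S.Fplus ≤ m := iSup₂_le S.F_le

lemma zero_one (E : Set Ω) (hE : MeasurableSet[S.Fplus] E)
    (h : ∀ t ∈ S.T, ∀ G, MeasurableSet[S.F t] G → S.P (G ∩ E) = S.P G * S.P E) :
    S.P E = 0 ∨ S.P E = 1 := by
  have := S.P_prob
  have hEm : MeasurableSet E := S.Fplus_le _ hE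
  have hgen : S.Fplus = MeasurableSpace.generateFrom {G | ∃ t ∈ S.T, MeasurableSet[S.F t] G} := by
    apply le_antisymm
    · refine iSup₂_le fun t ht G hG => ?_
      exact MeasurableSpace.measurableSet_generateFrom ⟨t, ht, hG⟩
    · refine MeasurableSpace.generateFrom_le ?_
      rintro G ⟨t, ht, hG⟩
      exact (le_iSup₂ (f := fun t (_ : t ∈ S.T) => S.F t) t ht) _ hG
  have hpi : IsPiSystem {G | ∃ t ∈ S.T, MeasurableSet[S.F t] G} := by
    rintro A ⟨s, hs, hA⟩ B ⟨t, ht, hB⟩ -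
    rcases le_total s t with hst | hst
    · exact ⟨t, ht, (S.F_mono s hs t ht hst _ hA).inter hB⟩
    · exact ⟨s, hs, hA.inter (S.F_mono t ht s hs hst _ hB)⟩
  have key : ∀ G, MeasurableSet[S.Fplus] G → S.P (G ∩ E) = S.P G * S.P E := by
    intro G hG
    induction G, hG using MeasurableSpace.induction_on_inter hgen hpi with
    | empty => simp
    | basic G hG => obtain ⟨t, ht, hG⟩ := hG; exact h t ht G hG
    | compl G hG ih =>
      have hGm := S.Fplus_le _ hG
      have e1 : S.P (G ∩ E) + S.P (Gᶜ ∩ E) = S.P E := by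
        rw [inter_comm, inter_comm Gᶜ, ← Set.sdiff_eq]
        exact measure_inter_add_sdiff E hGm
      have e2 : S.P G * S.P E + S.P Gᶜ * S.P E = S.P E := by
        rw [← add_mul, measure_add_measure_compl hGm, measure_univ, one_mul]
      rw [ih] at e1
      refine (ENNReal.add_right_inj ?_).1 (e1.trans e2.symm)
      finiteness
    | iUnion f hd hf ih =>
      rw [iUnion_inter, measure_iUnion, measure_iUnion hd, ← ENNReal.tsum_mul_right]
      · exact tsum_congr ih
      · exact fun i => S.Fplus_le _ (hf i)
      · exact fun i j hij => (hd hij).mono inter_subset_left inter_subset_left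
      · exact fun i => (S.Fplus_le _ (hf i)).inter hEm
  have hk := key E hE
  rw [inter_self] at hk
  by_cases hz : S.P E = 0
  · exact Or.inl hz
  · right
    have h2 : S.P E * 1 = S.P E * S.P E := by rw [mul_one]; exact hk
    exact ((ENNReal.mul_right_inj hz (measure_ne_top _ _)).1 h2).symm

lemma indep_aux (q : Ω → UnitAddCircle) (hq_meas : @Measurable Ω UnitAddCircle S.Fplus _ q)
    (t : ℝ) (ht : t ∈ S.T) (E : Set Ω) (B : Set UnitAddCircle)
    (hE : MeasurableSet[S.F t] E) (hB : MeasurableSet B) :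
    S.P (E ∩ (fun ω => q (S.θ t ω)) ⁻¹' B) = S.P E * S.P ((fun ω => q (S.θ t ω)) ⁻¹' B) := by
  have h1 := S.θ_indep t ht E (q ⁻¹' B) hE (hq_meas hB)
  have h2 := S.θ_indep t ht univ (q ⁻¹' B) MeasurableSet.univ (hq_meas hB)
  have := S.P_prob
  rw [univ_inter, measure_univ, one_mul] at h2
  rw [← h2] at h1
  exact h1

lemma map_shift (q : Ω → UnitAddCircle) (hq_meas : @Measurable Ω UnitAddCircle S.Fplus _ q)
    (t : ℝ) (ht : t ∈ S.T) : S.P.map (fun ω => q (S.θ t ω)) = S.P.map q := by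
  have hq : Measurable q := hq_meas.mono S.Fplus_le le_rfl
  have h := S.θ_preserving t ht
  conv_rhs => rw [← h.map_eq]
  rw [Measure.map_map hq h.measurable]
  rfl

lemma rev_aux (q : Ω → UnitAddCircle) (hq_meas : @Measurable Ω UnitAddCircle S.Fplus _ q)
    (hq_fix : ∀ t ∈ S.T, ∀ᵐ ω ∂S.P, S.φ t ω (q ω) = q (S.θ t ω))
    (t : ℝ) (ht : t ∈ S.T) (A B : Set UnitAddCircle) (hA : MeasurableSet A)
    (hB : MeasurableSet B) :
    S.P (q ⁻¹' A ∩ S.θ t ⁻¹' (q ⁻¹' B)) = ∫⁻ x in B, S.revTrans t x A ∂(S.P.map q) := by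
  have := S.P_prob
  have hq : Measurable q := hq_meas.mono S.Fplus_le le_rfl
  have hg : Measurable (fun ω => q (S.θ t ω)) := hq.comp (S.θ_preserving t ht).measurable
  let C : Set (Ω × UnitAddCircle) := {p | (S.φ t p.1).symm p.2 ∈ A ∧ p.2 ∈ B}
  have hC : @MeasurableSet (Ω × UnitAddCircle) ((S.F t).prod inferInstance) C :=
    @aux_C1 Ω (S.F t) (S.φ t) (S.φ_meas t ht) A B hA hB
  have h1 := @aux_right Ω Ω UnitAddCircle m (S.F t) _ S.P _ id (fun ω => q (S.θ t ω))
    (measurable_id'' (S.F_le t ht)) hg (fun E B hE hB => S.indep_aux q hq_meas t ht E B hE hB) C hC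
  rw [S.map_shift q hq_meas t ht] at h1
  have h2 : S.P (q ⁻¹' A ∩ S.θ t ⁻¹' (q ⁻¹' B)) = S.P {ω | (id ω, q (S.θ t ω)) ∈ C} := by
    apply measure_congr
    filter_upwards [hq_fix t ht] with ω hω
    have : (S.φ t ω).symm (q (S.θ t ω)) = q ω := by rw [← hω]; simp
    apply propext
    change (q ω ∈ A ∧ q (S.θ t ω) ∈ B) ↔ ((S.φ t ω).symm (q (S.θ t ω)) ∈ A ∧ q (S.θ t ω) ∈ B)
    rw [this]
  rw [h2, h1, ← lintegral_indicator hB]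
  refine lintegral_congr fun y => ?_
  by_cases hy : y ∈ B <;> simp [C, hy, revTrans]

lemma ergodic_aux (q : Ω → UnitAddCircle) (hq_meas : @Measurable Ω UnitAddCircle S.Fplus _ q)
    (hq_fix : ∀ t ∈ S.T, ∀ᵐ ω ∂S.P, S.φ t ω (q ω) = q (S.θ t ω)) :
    S.ErgodicFor S.revTrans (S.P.map q) := by
  have := S.P_prob
  have hq : Measurable q := hq_meas.mono S.Fplus_le le_rfl
  refine ⟨fun t ht A hA => ?_, fun A hA h => ?_⟩
  · have := S.rev_aux q hq_meas hq_fix t ht A univ hA MeasurableSet.univ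
    rw [Measure.map_apply hq hA]
    simpa using this
  · rw [Measure.map_apply hq hA]
    apply S.zero_one _ (hq_meas hA)
    intro t ht G hG
    have hθ := S.θ_preserving t ht
    have hE : MeasurableSet (q ⁻¹' A) := hq hA
    have h1 : S.P (q ⁻¹' A ∩ S.θ t ⁻¹' (q ⁻¹' A)) = S.P (q ⁻¹' A) := by
      rw [S.rev_aux q hq_meas hq_fix t ht A A hA hA]
      rw [setLIntegral_congr_fun_ae (g := fun _ => 1) hA (h t ht)]
      simp [Measure.map_apply hq hA]
    have h2 : S.P (S.θ t ⁻¹' (q ⁻¹' A)) = S.P (q ⁻¹' A) :=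
      hθ.measure_preimage hE.nullMeasurableSet
    have e1 := ae_eq_of_subset_of_measure_ge inter_subset_left h1.ge
      (hE.inter (hθ.measurable hE)).nullMeasurableSet (measure_ne_top S.P _)
    have e2 := ae_eq_of_subset_of_measure_ge inter_subset_right (h2.trans h1.symm).le
      (hE.inter (hθ.measurable hE)).nullMeasurableSet (measure_ne_top S.P _)
    have e3 := e1.symm.trans e2
    rw [measure_congr ((ae_eq_refl G).inter e3)]
    exact S.θ_indep t ht G _ hG (hq_meas hA)

lemma atom_aux (q : Ω → UnitAddCircle) (hq_meas : @Measurable Ω UnitAddCircle S.Fplus _ q)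
    (hq_fix : ∀ t ∈ S.T, ∀ᵐ ω ∂S.P, S.φ t ω (q ω) = q (S.θ t ω))
    (p : UnitAddCircle) (hp : ∀ x, S.P.map q {x} ≤ S.P.map q {p}) :
    S.P (q ⁻¹' {p}) = 0 ∨ S.P (q ⁻¹' {p}) = 1 := by
  have := S.P_prob
  have hq : Measurable q := hq_meas.mono S.Fplus_le le_rfl
  have hEm : MeasurableSet (q ⁻¹' {p}) := hq (measurableSet_singleton p)
  have hmap : S.P.map q {p} = S.P (q ⁻¹' {p}) := Measure.map_apply hq (measurableSet_singleton p)
  apply S.zero_one _ (hq_meas (measurableSet_singleton p))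
  intro t ht
  have hg : Measurable (fun ω => q (S.θ t ω)) := hq.comp (S.θ_preserving t ht).measurable
  have key : ∀ G, MeasurableSet[S.F t] G →
      S.P (G ∩ q ⁻¹' {p}) ≤ S.P G * S.P (q ⁻¹' {p}) := by
    intro G hG
    let C : Set (Ω × UnitAddCircle) := {z | z.1 ∈ G ∧ z.2 = S.φ t z.1 p}
    have hC : @MeasurableSet (Ω × UnitAddCircle) ((S.F t).prod inferInstance) C :=
      @aux_C2 Ω (S.F t) (S.φ t) (S.φ_meas t ht) G hG p
    have h1 := @aux_left Ω Ω UnitAddCircle m (S.F t) _ S.P _ id (fun ω => q (S.θ t ω))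
      (measurable_id'' (S.F_le t ht)) hg
      (fun E B hE hB => S.indep_aux q hq_meas t ht E B hE hB) C hC
    rw [S.map_shift q hq_meas t ht] at h1
    have h2 : S.P (G ∩ q ⁻¹' {p}) = S.P {ω | (id ω, q (S.θ t ω)) ∈ C} := by
      apply measure_congr
      filter_upwards [hq_fix t ht] with ω hω
      apply propext
      change (ω ∈ G ∧ q ω = p) ↔ (ω ∈ G ∧ q (S.θ t ω) = S.φ t ω p)
      rw [← hω, (S.φ t ω).injective.eq_iff]
    rw [h2, h1, mul_comm, ← lintegral_indicator_const (S.F_le t ht _ hG)]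
    refine lintegral_mono fun ω => ?_
    by_cases hy : ω ∈ G
    · have := hp (S.φ t ω p)
      rw [hmap] at this
      simpa [C, hy] using this
    · simp [C, hy]
  intro G hG
  have hGm := S.F_le t ht _ hG
  have e1 : S.P (G ∩ q ⁻¹' {p}) + S.P (Gᶜ ∩ q ⁻¹' {p}) = S.P (q ⁻¹' {p}) := by
    rw [inter_comm, inter_comm Gᶜ, ← Set.sdiff_eq]
    exact measure_inter_add_sdiff _ hGm
  have e2 : S.P G * S.P (q ⁻¹' {p}) + S.P Gᶜ * S.P (q ⁻¹' {p}) = S.P (q ⁻¹' {p}) := by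
    rw [← add_mul, measure_add_measure_compl hGm, measure_univ, one_mul]
  refine le_antisymm (key G hG) ?_
  have hc := key Gᶜ hG.compl
  have : S.P G * S.P (q ⁻¹' {p}) + S.P Gᶜ * S.P (q ⁻¹' {p}) ≤
      S.P (G ∩ q ⁻¹' {p}) + S.P Gᶜ * S.P (q ⁻¹' {p}) := by
    rw [e2]
    calc _ = _ := e1.symm
      _ ≤ _ := by gcongr
  exact (ENNReal.add_le_add_iff_right (by finiteness)).1 this

lemma detFixed_aux (p : UnitAddCircle) (h : ∀ t ∈ S.T, ∀ᵐ ω ∂S.P, S.φ t ω p = p) :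
    S.DetFixedPoint p := by
  rcases S.T_cases with hT | hT
  · have : ∀ᵐ ω ∂S.P, ∀ n : ℕ, S.φ n ω p = p := by
      rw [ae_all_iff]
      intro n
      exact h n (by rw [hT]; exact ⟨n, rfl⟩)
    filter_upwards [this] with ω hω t ht
    rw [hT] at ht
    obtain ⟨n, rfl⟩ := ht
    exact hω n
  · have : ∀ᵐ ω ∂S.P, ∀ r : ℚ, 0 ≤ (r : ℝ) → S.φ r ω p = p := by
      rw [ae_all_iff]
      intro r
      by_cases hr : 0 ≤ (r : ℝ)
      · filter_upwards [h r (by rw [hT]; exact hr)] with ω hω _ using hω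
      · exact ae_of_all _ fun ω h' => absurd h' hr
    filter_upwards [this] with ω hω t ht
    obtain ⟨u, hu, hlt, hlim⟩ := Real.exists_seq_rat_strictAnti_tendsto t
    have ht0 : 0 ≤ t := by rw [hT] at ht; exact ht
    have hpos : ∀ n, 0 ≤ (u n : ℝ) := fun n => ht0.trans (hlt n).le
    have h1 := S.φ_cadlag_right ω t ht (fun n => (u n : ℝ)) (fun n => by rw [hT]; exact hpos n)
      (fun a b hab => Rat.cast_le.2 (hu.antitone hab)) hlim (fun _ => p) p tendsto_const_nhds
    have h2 : (fun n => S.φ (u n) ω p) = fun _ => p := funext fun n => hω (u n) (hpos n)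
    rw [h2] at h1
    exact tendsto_nhds_unique tendsto_const_nhds h1 |>.symm

end RDS

/-- the law of an `𝓕₊`-measurable random fixed point `q` is ergodic for the
reverse transition probabilities, and is either atomless or a Dirac mass at a deterministic
fixed point. -/
theorem randomFixedPoint_law_ergodic_atomless_or_dirac
    {Ω : Type} [MeasurableSpace Ω] (S : RDS Ω) (q : Ω → UnitAddCircle)
    (hq_meas : @Measurable Ω UnitAddCircle S.Fplus _ q)
    (hq_fix : ∀ t ∈ S.T, ∀ᵐ ω ∂S.P, S.φ t ω (q ω) = q (S.θ t ω)) :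
    S.ErgodicFor S.revTrans (S.P.map q) ∧
      (Atomless (S.P.map q) ∨
        ∃ p : UnitAddCircle, S.DetFixedPoint p ∧ S.P.map q = Measure.dirac p) := by
  refine ⟨S.ergodic_aux q hq_meas hq_fix, ?_⟩
  by_cases hat : Atomless (S.P.map q)
  · exact Or.inl hat
  right
  have := S.P_prob
  have hq : Measurable q := hq_meas.mono S.Fplus_le le_rfl
  have := Measure.isProbabilityMeasure_map (μ := S.P) hq.aemeasurable
  unfold Atomless at hat
  push Not at hat
  obtain ⟨x₀, hx₀⟩ := hat
  have hfin := Measure.finite_const_le_meas_of_disjoint_iUnion (S.P.map q)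
    (pos_iff_ne_zero.2 hx₀) (As := fun x : UnitAddCircle => {x})
    (fun x => measurableSet_singleton x)
    (fun x y hxy => by simpa [Function.onFun] using hxy) (measure_ne_top _ _)
  obtain ⟨p, hpmem, hp⟩ := Set.exists_max_image _ (fun x => S.P.map q {x}) hfin ⟨x₀, by simp⟩
  have hp0 : S.P.map q {x₀} ≤ S.P.map q {p} := hpmem
  have hmax : ∀ x, S.P.map q {x} ≤ S.P.map q {p} := by
    intro x
    rcases le_total (S.P.map q {x₀}) (S.P.map q {x}) with h | h
    · exact hp x h
    · exact h.trans hp0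
  have hmap : S.P.map q {p} = S.P (q ⁻¹' {p}) := Measure.map_apply hq (measurableSet_singleton p)
  have h1 : S.P (q ⁻¹' {p}) = 1 := by
    refine (S.atom_aux q hq_meas hq_fix p hmax).resolve_left fun h0 => hx₀ ?_
    rw [hmap, h0] at hp0
    exact le_antisymm hp0 zero_le
  have hae : ∀ᵐ ω ∂S.P, q ω = p :=
    (prob_compl_eq_zero_iff (hq (measurableSet_singleton p))).2 h1
  refine ⟨p, S.detFixed_aux p fun t ht => ?_, ?_⟩
  · filter_upwards [hae, hq_fix t ht, (S.θ_preserving t ht).quasiMeasurePreserving.ae hae]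
      with ω h1 h2 h3
    rw [h1, h3] at h2
    exact h2
  · rw [Measure.map_congr (g := fun _ => p) hae, Measure.map_const]
    simp
end
end

section
/- Let ρ be a probability measure on 𝕊¹ that is ergodic with respect to either the transition family (φ̄ₓᵗ) given by φ̄ₓᵗ(A)=ℙ(ω : φ(t,ω)⁻¹(x)∈A), or the transition family (φₓᵗ) given by φₓᵗ(A)=ℙ(ω : φ(t,ω)x∈A), for an invertible RDS φ on 𝕊¹. Then either ρ is atomless, or ρ = (1/|P|)·Σ_{x∈P} δₓ for some finite forward-invariant set P⊆𝕊¹. -/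
open MeasureTheory Filter Topology Set ENNReal

noncomputable section

/-- One-step argument: if `ρ{y}` is the average of `ρ{g ω}` and `ρ{y}` is maximal then
`ρ{g ω}` is a.s. maximal. -/
lemma aux_step {Ω : Type} [MeasurableSpace Ω] (P : Measure Ω) [IsProbabilityMeasure P]
    (ρ : Measure UnitAddCircle) [IsProbabilityMeasure ρ]
    (E : Set (Ω × UnitAddCircle)) (hE : MeasurableSet E) (g : Ω → UnitAddCircle)
    (hg : ∀ ω x, (ω, x) ∈ E ↔ x = g ω) (y : UnitAddCircle)
    (hmax : ∀ x, ρ {x} ≤ ρ {y})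
    (hst : ρ {y} = ∫⁻ x, P {ω | (ω, x) ∈ E} ∂ρ) :
    ∀ᵐ ω ∂P, ρ {g ω} = ρ {y} := by
  have h1 : ∫⁻ x, P {ω | (ω, x) ∈ E} ∂ρ = ∫⁻ ω, ρ (Prod.mk ω ⁻¹' E) ∂P := by
    rw [← Measure.prod_apply hE, Measure.prod_apply_symm hE]
    rfl
  have h2 : ∀ ω, Prod.mk ω ⁻¹' E = {g ω} := by
    intro ω; ext x; simp [hg]
  have hm : Measurable fun ω => ρ (Prod.mk ω ⁻¹' E) := measurable_measure_prodMk_left hE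
  simp only [h2] at h1 hm
  rw [h1] at hst
  refine ae_eq_of_ae_le_of_lintegral_le (Eventually.of_forall fun ω => hmax _) ?_
    aemeasurable_const ?_
  · rw [← hst]; exact measure_ne_top _ _
  · rw [← hst]; simp

lemma aux_uniform (ρ : Measure UnitAddCircle) [IsProbabilityMeasure ρ]
    (P : Finset UnitAddCircle) (c : ℝ≥0∞) (hc : ∀ x ∈ P, ρ {x} = c)
    (hP : ρ (P : Set UnitAddCircle) = 1) :
    ρ = (P.card : ℝ≥0∞)⁻¹ • ∑ x ∈ P, Measure.dirac x := by
  classical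
  have h0 : ρ (P : Set UnitAddCircle)ᶜ = 0 := by
    rw [prob_compl_eq_zero_iff P.measurableSet]; exact hP
  have hcard : (P.card : ℝ≥0∞) * c = 1 := by
    rw [← hP, ← sum_measure_singleton, Finset.sum_congr rfl hc]; simp
  have hc' : c = (P.card : ℝ≥0∞)⁻¹ := ENNReal.eq_inv_of_mul_eq_one_left (by rw [mul_comm]; exact hcard)
  ext A hA
  have h1 : ρ A = ρ (A ∩ P) := by
    refine le_antisymm ?_ (measure_mono inter_subset_left)
    calc ρ A ≤ ρ (A ∩ P) + ρ (A \ P) := measure_le_inter_add_sdiff _ _ _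
      _ ≤ ρ (A ∩ P) + ρ (P : Set UnitAddCircle)ᶜ := by
          gcongr; intro x hx; exact hx.2
      _ = ρ (A ∩ P) := by rw [h0, add_zero]
  have h2 : A ∩ (P : Set UnitAddCircle) = ((P.filter (· ∈ A) : Finset UnitAddCircle) : Set UnitAddCircle) := by
    ext x; simp [and_comm]
  rw [h1, h2, ← sum_measure_singleton,
    Finset.sum_congr rfl (fun x hx => hc x (Finset.mem_filter.1 hx).1), ← hc']
  simp [Measure.dirac_apply' _ hA, Set.indicator_apply, mul_comm]

lemma aux_forward {Ω : Type} [MeasurableSpace Ω] (S : RDS Ω) (P : Finset UnitAddCircle)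
    (h : ∀ t ∈ S.T, ∀ᵐ ω ∂S.P, ⇑(S.φ t ω) '' (P : Set UnitAddCircle) ⊆ P) :
    S.ForwardInvariant ↑P := by
  unfold RDS.ForwardInvariant
  rcases S.T_cases with hT | hT
  · have h' : ∀ᵐ ω ∂S.P, ∀ n : ℕ, ⇑(S.φ n ω) '' (P : Set UnitAddCircle) ⊆ P :=
      ae_all_iff.2 fun n => h n (by rw [hT]; exact ⟨n, rfl⟩)
    filter_upwards [h'] with ω hω t ht
    rw [hT] at ht
    obtain ⟨n, rfl⟩ := ht
    exact hω n
  · have h' : ∀ᵐ ω ∂S.P, ∀ q : ℚ, 0 ≤ (q : ℝ) → ⇑(S.φ q ω) '' (P : Set UnitAddCircle) ⊆ P := by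
      refine ae_all_iff.2 fun q => ?_
      by_cases hq : 0 ≤ (q : ℝ)
      · filter_upwards [h q (by rw [hT]; exact hq)] with ω hω _ using hω
      · exact Eventually.of_forall fun ω h => absurd h hq
    filter_upwards [h'] with ω hω t ht
    rintro _ ⟨x, hx, rfl⟩
    have ht0 : 0 ≤ t := by rw [hT] at ht; exact ht
    obtain ⟨u, hu, hut, hlim⟩ := Rat.denseRange_cast.exists_seq_strictAnti_tendsto (Rat.cast_mono (K := ℝ)) t
    have hu0 : ∀ n, 0 ≤ ((u n : ℚ) : ℝ) := fun n => ht0.trans (hut n).le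
    have := S.φ_cadlag_right ω t ht (fun n => (u n : ℝ)) (fun n => by rw [hT]; exact hu0 n)
      (fun a b hab => by
        have := hu.antitone hab
        simpa using this) hlim (fun _ => x) x tendsto_const_nhds
    exact P.finite_toSet.isClosed.mem_of_tendsto this
      (Eventually.of_forall fun n => hω (u n) (hu0 n) ⟨x, hx, rfl⟩)

lemma aux_surj (P : Finset UnitAddCircle) (f : UnitAddCircle ≃ UnitAddCircle)
    (h : ∀ x ∈ P, f x ∈ P) : ∀ x ∈ P, f.symm x ∈ P := by
  classical
  have : P.image f = P := Finset.eq_of_subset_of_card_le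
    (by intro z hz; obtain ⟨x, hx, rfl⟩ := Finset.mem_image.1 hz; exact h x hx)
    (by rw [Finset.card_image_of_injective _ f.injective])
  intro x hx
  rw [← this] at hx
  obtain ⟨z, hz, rfl⟩ := Finset.mem_image.1 hx
  simpa using hz

/-- a probability measure ergodic for the reverse or forward transition family
is either atomless or the uniform measure on a finite forward-invariant set. -/
theorem ergodic_atomless_or_uniform_on_finite_invariant
    {Ω : Type} [MeasurableSpace Ω] (S : RDS Ω) (ρ : Measure UnitAddCircle)
    [IsProbabilityMeasure ρ]
    (h : S.ErgodicFor S.revTrans ρ ∨ S.ErgodicFor S.fwdTrans ρ) :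
    Atomless ρ ∨ ∃ P : Finset UnitAddCircle, P.Nonempty ∧
      S.ForwardInvariant ↑P ∧
      ρ = (P.card : ℝ≥0∞)⁻¹ • ∑ x ∈ P, Measure.dirac x := by
  classical
  have := S.P_prob
  by_cases hat : Atomless ρ
  · exact Or.inl hat
  right
  unfold Atomless at hat
  push Not at hat
  obtain ⟨x0, hx0⟩ := hat
  have hfin : ∀ a : ℝ≥0∞, a ≠ 0 → {x : UnitAddCircle | a ≤ ρ {x}}.Finite := by
    intro a ha
    refine Measure.finite_const_le_meas_of_disjoint_iUnion ρ (pos_iff_ne_zero.2 ha)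
      (As := fun x : UnitAddCircle => {x}) (fun x => measurableSet_singleton x) ?_
      (measure_ne_top _ _)
    intro x y hxy
    simpa using hxy
  obtain ⟨p, hp, hpm⟩ := Set.exists_max_image _ (fun x => ρ {x}) (hfin _ hx0) ⟨x0, le_refl (ρ {x0})⟩
  have hmax : ∀ x, ρ {x} ≤ ρ {p} := by
    intro x
    by_cases hx : ρ {x0} ≤ ρ {x}
    · exact hpm x hx
    · exact (not_le.1 hx).le.trans hp
  have hp0 : ρ {p} ≠ 0 := fun h0 => hx0 (le_antisymm (h0 ▸ hmax x0) zero_le)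
  set P : Finset UnitAddCircle := (hfin _ hp0).toFinset with hPdef
  have hmem : ∀ x, x ∈ P ↔ ρ {x} = ρ {p} := by
    intro x
    simp only [hPdef, Set.Finite.mem_toFinset, Set.mem_ofPred_eq]
    exact ⟨fun h => le_antisymm (hmax x) h, fun h => h.ge⟩
  have hpP : p ∈ P := (hmem p).2 rfl
  have hmeas : ∀ t ∈ S.T, Measurable fun q : Ω × UnitAddCircle => S.φ t q.1 q.2 := by
    intro t ht
    exact (S.φ_meas t ht).mono (sup_le_sup
      (MeasurableSpace.comap_mono (S.F_le t ht)) le_rfl) le_rfl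
  have hρP : ρ (P : Set UnitAddCircle) ≠ 0 := fun h0 =>
    hp0 (measure_mono_null (by simpa using hpP) h0)
  -- invariance for each time
  have key : (∀ t ∈ S.T, ∀ᵐ ω ∂S.P, ∀ x ∈ P, S.φ t ω x ∈ P) := by
    intro t ht
    rcases h with h | h
    · have hy : ∀ y ∈ P, ∀ᵐ ω ∂S.P, S.φ t ω y ∈ P := by
        intro y hy
        have hyp := (hmem y).1 hy
        have := aux_step S.P ρ {q | q.2 = S.φ t q.1 y}
          (measurableSet_eq_fun measurable_snd
            ((hmeas t ht).comp (measurable_fst.prodMk measurable_const)))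
          (fun ω => S.φ t ω y) (fun ω x => Iff.rfl) y (fun x => hyp ▸ hmax x) (by
            rw [h.1 t ht {y} (measurableSet_singleton y)]
            refine lintegral_congr fun x => ?_
            unfold RDS.revTrans
            congr 1
            ext ω
            simp [Homeomorph.symm_apply_eq])
        filter_upwards [this] with ω hω
        rw [hmem, hω, hyp]
      exact (Finset.eventually_all P).2 hy
    · have hy : ∀ y ∈ P, ∀ᵐ ω ∂S.P, (S.φ t ω).symm y ∈ P := by
        intro y hy
        have hyp := (hmem y).1 hy
        have := aux_step S.P ρ {q | S.φ t q.1 q.2 = y}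
          (measurableSet_eq_fun (hmeas t ht) measurable_const)
          (fun ω => (S.φ t ω).symm y) (fun ω x => (Homeomorph.eq_symm_apply _).symm)
          y (fun x => hyp ▸ hmax x) (by
            rw [h.1 t ht {y} (measurableSet_singleton y)]
            rfl)
        filter_upwards [this] with ω hω
        rw [hmem, hω, hyp]
      filter_upwards [(Finset.eventually_all P).2 hy] with ω hω
      exact aux_surj P (S.φ t ω).symm.toEquiv hω
  have hP1 : ρ (P : Set UnitAddCircle) = 1 := by
    rcases h with h | h
    · refine (h.2 P P.measurableSet fun t ht => Eventually.of_forall fun x hx => ?_).resolve_left hρP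
      refine le_antisymm prob_le_one ?_
      rw [← measure_univ (μ := S.P)]
      refine measure_mono_ae ?_
      filter_upwards [key t ht] with ω hω _
      exact aux_surj P (S.φ t ω).toEquiv hω x hx
    · refine (h.2 P P.measurableSet fun t ht => Eventually.of_forall fun x hx => ?_).resolve_left hρP
      refine le_antisymm prob_le_one ?_
      rw [← measure_univ (μ := S.P)]
      refine measure_mono_ae ?_
      filter_upwards [key t ht] with ω hω _
      exact hω x hx
  refine ⟨P, ⟨p, hpP⟩, aux_forward S P fun t ht => ?_, aux_uniform ρ P _ (fun x hx => (hmem x).1 hx) hP1⟩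
  filter_upwards [key t ht] with ω hω
  rintro _ ⟨x, hx, rfl⟩
  exact hω x hx
end
end
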